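/- arXiv:1408.2137 — 7 statements merged into one kernel-verified Lean document; each statement's English description precedes it below -/
import Mathlib

section
/- Let Z be a Polish space and let X be a subset of Z that has the property of Baire in the restricted sense. Then either X (with the subspace topology) has a dense Polish subspace, or X is not a Baire space. -/
/-- A subset `X` of a space `Z` has the property of Baire in `Z` if it is the
symmetric difference of an open set and a meager set. -/
def HasBaireProperty {Z : Type*} [TopologicalSpace Z] (X : Set Z) : Prop :=
  ∃ U : Set Z, IsOpen U ∧ ∃ M : Set Z, IsMeagre M ∧ X = symmDiff U M

/-- A subset `X` of a space `Z` has the property of Baire in the restricted sense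
if for every subspace `S` of `Z`, the trace of `X` on `S` has the property of
Baire in `S`. -/
def HasRestrictedBaireProperty {Z : Type*} [TopologicalSpace Z] (X : Set Z) : Prop :=
  ∀ S : Set Z, HasBaireProperty ((Subtype.val ⁻¹' X) : Set S)

/-!
A set `X` that is dense in a space `K`, has the property of Baire there, and is itself a Baire
space is residual in `K`. Indeed, write `X` as the symmetric difference of an open set `U` and a
meagre set `M`. As `X` is dense, `M ∩ X` is meagre in `X`, so its complement, which lies in `U`, is
dense in `X` and hence in `K`; thus `U` is dense open. For `K = closure X` in a completely
metrizable space, `X` then contains a dense Gδ subset of `K`, and Gδ subsets of completely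
metrizable spaces are completely metrizable.
-/

open Set Filter Topology TopologicalSpace

section CompletelyMetrizable

variable {Z : Type*} [TopologicalSpace Z]

theorem isCompletelyMetrizableSpace_of_isOpen [IsCompletelyMetrizableSpace Z] {s : Set Z}
    (hs : IsOpen s) : IsCompletelyMetrizableSpace s := by
  let := upgradeIsCompletelyMetrizable Z
  lift s to Opens Z using hs
  exact inferInstanceAs (IsCompletelyMetrizableSpace s.CompleteCopy)

theorem isCompletelyMetrizableSpace_iInter [T2Space Z] {ι : Type*} [Countable ι] [Nonempty ι]
    {s : ι → Set Z} (hs : ∀ i, IsCompletelyMetrizableSpace (s i)) :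
    IsCompletelyMetrizableSpace (⋂ i, s i : Set Z) := by
  let i₀ : ι := Classical.arbitrary ι
  let diag : (⋂ i, s i : Set Z) → ∀ i, s i := fun x i ↦ ⟨x, mem_iInter.1 x.2 i⟩
  have continuous_coord (i : ι) : Continuous fun y : ∀ i, s i ↦ (y i : Z) :=
    continuous_subtype_val.comp (continuous_apply i)
  have isEmbedding_diag : IsEmbedding diag :=
    .of_comp (continuous_pi fun i ↦ continuous_subtype_val.subtype_mk _) (continuous_coord i₀)
      .subtypeVal
  have range_diag : range diag = ⋂ i, {y | (y i : Z) = y i₀} := by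
    refine Subset.antisymm ?_ fun y hy ↦ ?_
    · rintro _ ⟨x, rfl⟩
      exact mem_iInter.2 fun i ↦ rfl
    · have coord_eq (i : ι) : (y i : Z) = y i₀ := mem_iInter.1 hy i
      exact ⟨⟨y i₀, mem_iInter.2 fun i ↦ coord_eq i ▸ (y i).2⟩,
        funext fun i ↦ Subtype.ext (coord_eq i).symm⟩
  have isClosed_range_diag : IsClosed (range diag) := by
    rw [range_diag]
    exact isClosed_iInter fun i ↦ isClosed_eq (continuous_coord i) (continuous_coord i₀)
  exact IsClosedEmbedding.IsCompletelyMetrizableSpace ⟨isEmbedding_diag, isClosed_range_diag⟩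

theorem isCompletelyMetrizableSpace_of_isGδ [IsCompletelyMetrizableSpace Z] {s : Set Z}
    (hs : IsGδ s) : IsCompletelyMetrizableSpace s := by
  obtain ⟨U, hU, rfl⟩ := hs.eq_iInter_nat
  exact isCompletelyMetrizableSpace_iInter fun n ↦ isCompletelyMetrizableSpace_of_isOpen (hU n)

end CompletelyMetrizable

section Residual

variable {Y K : Type*} [TopologicalSpace Y] [TopologicalSpace K] {f : Y → K}

theorem tendsto_residual_of_isInducing_of_denseRange (hf : IsInducing f) (hd : DenseRange f) :
    Tendsto f (residual Y) (residual K) := by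
  apply le_countableGenerate_iff_of_countableInterFilter.mpr
  rintro t ⟨ht, htd⟩
  refine residual_of_dense_open (ht.preimage hf.continuous) (hf.dense_iff.2 fun y ↦ ?_)
  rw [image_preimage_eq_inter_range]
  exact htd.inter_of_isOpen_left hd ht (f y)

theorem HasBaireProperty.range_mem_residual [BaireSpace Y] (hf : IsInducing f)
    (hd : DenseRange f) (h : HasBaireProperty (range f)) : range f ∈ residual K := by
  obtain ⟨U, hU, M, hM, hUM⟩ := h
  have dense_preimage : Dense (f ⁻¹' Mᶜ) :=
    dense_of_mem_residual (tendsto_residual_of_isInducing_of_denseRange hf hd hM)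
  have image_subset : f '' (f ⁻¹' Mᶜ) ⊆ U := by
    rintro _ ⟨y, hyM, rfl⟩
    have hy : f y ∈ symmDiff U M := hUM ▸ mem_range_self y
    exact hy.elim And.left fun hyMU ↦ absurd hyMU.1 hyM
  have dense_U : Dense U := (hd.dense_image hf.continuous dense_preimage).mono image_subset
  rw [hUM]
  filter_upwards [residual_of_dense_open hU dense_U, hM] with x hxU hxM
  exact Or.inl ⟨hxU, hxM⟩

end Residual

theorem statement0_general {Z : Type*} [TopologicalSpace Z] [IsCompletelyMetrizableSpace Z]
    (X : Set Z) (hX : HasBaireProperty (Subtype.val ⁻¹' X : Set (closure X))) :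
    (∃ G : Set Z, G ⊆ X ∧ IsCompletelyMetrizableSpace G ∧ X ⊆ closure G) ∨ ¬ BaireSpace X := by
  refine or_iff_not_imp_right.2 fun hBaire ↦ ?_
  have : BaireSpace X := not_not.1 hBaire
  have : IsCompletelyMetrizableSpace (closure X) := isClosed_closure.isCompletelyMetrizableSpace
  have range_eq : range (inclusion (subset_closure (s := X))) = Subtype.val ⁻¹' X :=
    range_inclusion subset_closure
  have residual_X : Subtype.val ⁻¹' X ∈ residual (closure X) := by
    rw [← range_eq] at hX ⊢
    exact hX.range_mem_residual (IsEmbedding.inclusion subset_closure).isInducing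
      ((denseRange_inclusion_iff subset_closure).2 subset_rfl)
  obtain ⟨G, hGX, isGδ_G, dense_G⟩ := mem_residual.1 residual_X
  have : IsCompletelyMetrizableSpace G := isCompletelyMetrizableSpace_of_isGδ isGδ_G
  refine ⟨Subtype.val '' G, image_subset_iff.2 hGX, ?_, fun x hx ↦ ?_⟩
  · exact (IsEmbedding.subtypeVal.homeomorphImage G).symm.isClosedEmbedding
      |>.IsCompletelyMetrizableSpace
  · exact closure_subtype.1 (dense_G ⟨x, subset_closure hx⟩)

/-- Let `Z` be a Polish space and let `X ⊆ Z` have the property of Baire in the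
restricted sense. Then either `X` has a dense Polish subspace, or `X` (with the
subspace topology) is not a Baire space. -/
theorem statement0 {Z : Type*} [TopologicalSpace Z] [PolishSpace Z] (X : Set Z)
    (hX : HasRestrictedBaireProperty X) :
    (∃ G : Set Z, G ⊆ X ∧ PolishSpace G ∧ X ⊆ closure G) ∨ ¬ BaireSpace X :=
  (statement0_general X (hX (closure X))).imp_left fun ⟨G, hGX, _, hXG⟩ ↦
    ⟨G, hGX, inferInstance, hXG⟩
end

section
/- Let X be a separable metrizable space that is not completely Baire but has a dense completely Baire subspace. Then X is not countable dense homogeneous. -/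
/-- A space is countable dense homogeneous (CDH) if for every pair of countable
dense subsets `A`, `B` there is a homeomorphism of the space onto itself
mapping `A` onto `B`. -/
def IsCDH (X : Type*) [TopologicalSpace X] : Prop :=
  ∀ A B : Set X, A.Countable → Dense A → B.Countable → Dense B →
    ∃ h : X ≃ₜ X, h '' A = B

/-- A space is completely Baire if every closed subspace is a Baire space. -/
def IsCompletelyBaire (X : Type*) [TopologicalSpace X] : Prop :=
  ∀ C : Set X, IsClosed C → BaireSpace C

/-!
Hurewicz: a metrizable space that is not completely Baire contains a nonempty countable perfect
set `Q`. Let `A` be a countable dense subset of the completely Baire subspace `D`. Both `A` and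
`A ∪ Q` are countable and dense, so in a countable dense homogeneous space some homeomorphism
carries `Q` into `A ⊆ D`. Its image is a closed subspace of `D`, hence Baire, whereas a nonempty
countable perfect set is never Baire.

For Hurewicz's theorem, let dense open sets `G n` have an intersection missing a nonempty open set.
The points of `Q` are added in countably many stages, each new stage accumulating at all the points
of the previous one, and the later points are confined to a region whose closure meets the
complement of `G n` only in points already present. Hence no new limit points appear.
-/

open Set Topology Filter Metric

section CountablePerfect

variable {X Y : Type*} [TopologicalSpace X] [TopologicalSpace Y]

lemma exists_isOpen_singleton_of_countable [T1Space X] [BaireSpace X] [Countable X] [Nonempty X] :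
    ∃ x : X, IsOpen {x} := by
  obtain ⟨x, hx⟩ := nonempty_interior_of_iUnion_of_closed
    (fun x : X ↦ isClosed_singleton) (iUnion_of_singleton X)
  exact ⟨x, interior_eq_iff_isOpen.1 (hx.subset_singleton_iff.1 interior_subset)⟩

lemma not_baireSpace_of_preperfect_of_countable [T1Space X] {Q : Set X} (hQ : Preperfect Q)
    (hcount : Q.Countable) (hne : Q.Nonempty) : ¬ BaireSpace Q := by
  intro _
  have := hcount.to_subtype
  have := hne.to_subtype
  obtain ⟨x, hx⟩ := exists_isOpen_singleton_of_countable (X := Q)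
  obtain ⟨V, hV, hVx⟩ := isOpen_induced_iff.1 hx
  have hxV : x ∈ Subtype.val ⁻¹' V := hVx ▸ mem_singleton x
  obtain ⟨y, ⟨hyV, hyQ⟩, hyx⟩ := preperfect_iff_nhds.1 hQ x x.2 V (hV.mem_nhds hxV)
  have hy : (⟨y, hyQ⟩ : Q) ∈ ({x} : Set Q) := hVx ▸ hyV
  exact hyx (congrArg Subtype.val hy)

lemma preperfect_image_of_injective {f : X → Y} {Q : Set X} (hQ : Preperfect Q)
    (hf : Continuous f) (hinj : Function.Injective f) : Preperfect (f '' Q) := by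
  rintro _ ⟨x, hx, rfl⟩
  simpa only [map_principal] using (hQ x hx).map hf.continuousAt hinj

lemma perfect_image_of_isClosedEmbedding {f : X → Y} {Q : Set X} (hQ : Perfect Q)
    (hf : IsClosedEmbedding f) : Perfect (f '' Q) :=
  ⟨hf.isClosedMap Q hQ.closed, preperfect_image_of_injective hQ.acc hf.continuous hf.injective⟩

lemma accPt_of_notMem_iInter_of_dense {ι : Type*} {G : ι → Set X} (hopen : ∀ i, IsOpen (G i))
    (hdense : ∀ i, Dense (G i)) {x : X} (hx : x ∉ ⋂ i, G i) (i : ι) : AccPt x (𝓟 (G i)) := by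
  obtain ⟨j, hj⟩ : ∃ j, x ∉ G j := by simpa only [mem_iInter, not_forall] using hx
  have hij : Dense (G i ∩ G j) := (hdense i).inter_of_isOpen_left (hdense j) (hopen i)
  refine accPt_iff_nhds.2 fun U hU ↦ ?_
  obtain ⟨y, ⟨hyi, hyj⟩, hyU⟩ := hij.inter_nhds_nonempty hU
  exact ⟨y, ⟨hyU, hyi⟩, ne_of_mem_of_not_mem hyj hj⟩

lemma exists_isOpen_nonempty_disjoint_iInter_of_not_baireSpace (hX : ¬ BaireSpace X) :
    ∃ (G : ℕ → Set X) (U : Set X), (∀ n, IsOpen (G n)) ∧ (∀ n, Dense (G n)) ∧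
      IsOpen U ∧ U.Nonempty ∧ Disjoint U (⋂ n, G n) := by
  obtain ⟨G, hopen, hdense, hG⟩ :
      ∃ G : ℕ → Set X, (∀ n, IsOpen (G n)) ∧ (∀ n, Dense (G n)) ∧ ¬ Dense (⋂ n, G n) := by
    by_contra! hdense
    exact hX ⟨hdense⟩
  rw [dense_iff_inter_open] at hG
  push Not at hG
  obtain ⟨U, hU, hne, hUG⟩ := hG
  exact ⟨G, U, hopen, hdense, hU, hne, disjoint_iff_inter_eq_empty.2 hUG⟩

end CountablePerfect

/-- A stage in the construction of a countable perfect set: the points chosen so far, and an open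
region inside `U` containing those points at which later points still have to accumulate. -/
structure CrowdingStage {X : Type*} [TopologicalSpace X] (U : Set X) where
  points : Set X
  region : Set X
  countable_points : points.Countable
  isClosed_points : IsClosed points
  isOpen_region : IsOpen region
  points_subset : points ⊆ U
  region_subset : region ⊆ U
  accPt_points : ∀ x ∈ points \ region, AccPt x (𝓟 points)

namespace CrowdingStage

variable {X : Type*} [TopologicalSpace X] {U : Set X}

/-- `T` is a possible successor of the stage `S`: its points accumulate at every point of `S`, and
the closure of its region leaves `G` only in points of `S`. -/
structure IsRefinedBy (G : Set X) (S T : CrowdingStage U) : Prop where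
  points_subset : S.points ⊆ T.points
  region_subset : T.region ⊆ S.region
  points_subset_union_region : T.points ⊆ S.points ∪ T.region
  closure_region_subset : closure T.region ⊆ S.points ∪ G
  accPt_points : ∀ x ∈ S.points, AccPt x (𝓟 T.points)

/-- The stage with a single point, whose region is all of `U`. -/
def singleton [T1Space X] {x : X} (hU : IsOpen U) (hx : x ∈ U) : CrowdingStage U where
  points := {x}
  region := U
  countable_points := countable_singleton x
  isClosed_points := isClosed_singleton
  isOpen_region := hU
  points_subset := singleton_subset_iff.2 hx
  region_subset := subset_rfl
  accPt_points := by
    rintro y ⟨rfl, hy⟩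
    exact absurd hx hy

lemma exists_seq_isRefinedBy {G : ℕ → Set X} (S₀ : CrowdingStage U)
    (h : ∀ n (S : CrowdingStage U), ∃ T, S.IsRefinedBy (G n) T) :
    ∃ S : ℕ → CrowdingStage U, S 0 = S₀ ∧ ∀ n, (S n).IsRefinedBy (G n) (S (n + 1)) := by
  choose next hnext using h
  exact ⟨fun n ↦ n.rec S₀ next, rfl, fun n ↦ hnext n _⟩

variable {G : ℕ → Set X} {S : ℕ → CrowdingStage U}

lemma points_subset_points_union_region (hS : ∀ n, (S n).IsRefinedBy (G n) (S (n + 1))) (m n : ℕ) :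
    (S m).points ⊆ (S n).points ∪ (S (n + 1)).region := by
  have hpoints : Monotone fun k ↦ (S k).points :=
    monotone_nat_of_le_succ fun k ↦ (hS k).points_subset
  have hregion : Antitone fun k ↦ (S k).region :=
    antitone_nat_of_succ_le fun k ↦ (hS k).region_subset
  rcases le_total m n with hmn | hnm
  · exact (hpoints hmn).trans subset_union_left
  induction m, hnm using Nat.le_induction with
  | base => exact subset_union_left
  | succ m hnm ih =>
    calc (S (m + 1)).points ⊆ (S m).points ∪ (S (m + 1)).region :=
          (hS m).points_subset_union_region
      _ ⊆ (S n).points ∪ (S (n + 1)).region :=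
          union_subset ih ((hregion (Nat.succ_le_succ hnm)).trans subset_union_right)

lemma preperfect_iUnion_points (hS : ∀ n, (S n).IsRefinedBy (G n) (S (n + 1))) :
    Preperfect (⋃ n, (S n).points) := by
  intro x hx
  obtain ⟨n, hn⟩ := mem_iUnion.1 hx
  exact ((hS n).accPt_points x hn).mono
    (principal_mono.2 (subset_iUnion (fun k ↦ (S k).points) (n + 1)))

lemma closure_iUnion_points_subset (hS : ∀ n, (S n).IsRefinedBy (G n) (S (n + 1))) (n : ℕ) :
    closure (⋃ m, (S m).points) ⊆ (S n).points ∪ G n :=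
  calc closure (⋃ m, (S m).points)
      ⊆ closure ((S n).points ∪ (S (n + 1)).region) :=
        closure_mono (iUnion_subset fun m ↦ points_subset_points_union_region hS m n)
    _ = (S n).points ∪ closure (S (n + 1)).region := by
        rw [closure_union, (S n).isClosed_points.closure_eq]
    _ ⊆ (S n).points ∪ G n := union_subset subset_union_left (hS n).closure_region_subset

lemma perfect_iUnion_points (hS : ∀ n, (S n).IsRefinedBy (G n) (S (n + 1)))
    (hUG : Disjoint (closure U) (⋂ n, G n)) : Perfect (⋃ n, (S n).points) := by
  refine ⟨isClosed_of_closure_subset fun x hx ↦ ?_, preperfect_iUnion_points hS⟩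
  obtain ⟨n, hn⟩ : ∃ n, x ∉ G n := by
    have hxU : x ∈ closure U := closure_mono (iUnion_subset fun n ↦ (S n).points_subset) hx
    simpa only [mem_iInter, not_forall] using disjoint_left.1 hUG hxU
  exact mem_iUnion.2 ⟨n, (closure_iUnion_points_subset hS n hx).resolve_right hn⟩

end CrowdingStage

lemma exists_pos_tendsto_cofinite_zero (ι : Type*) [Countable ι] :
    ∃ ε : ι → ℝ, (∀ i, 0 < ε i) ∧ Tendsto ε cofinite (𝓝 0) := by
  have := Encodable.ofCountable ι
  obtain ⟨ε, hpos, c, hsum, -⟩ := posSumOfEncodable zero_lt_one ι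
  exact ⟨ε, hpos, hsum.summable.tendsto_cofinite_zero⟩

lemma isClosed_union_iUnion_of_subset_closedBall {X ι : Type*} [PseudoMetricSpace X] {L : Set X}
    {K : ι → Set X} {x : ι → X} {ε : ι → ℝ} (hL : IsClosed L) (hK : ∀ i, IsClosed (K i))
    (hx : ∀ i, x i ∈ L) (hKx : ∀ i, K i ⊆ closedBall (x i) (ε i))
    (hε : Tendsto ε cofinite (𝓝 0)) : IsClosed (L ∪ ⋃ i, K i) := by
  refine isClosed_of_closure_subset fun y hy ↦ ?_
  by_contra hyLK
  obtain ⟨hyL, hyK⟩ := not_or.1 hyLK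
  obtain ⟨δ, hδ, hball⟩ := Metric.isOpen_iff.1 hL.isOpen_compl y hyL
  have hfin : {i | δ / 2 ≤ ε i}.Finite := by
    simpa only [eventually_cofinite, not_lt] using hε.eventually (gt_mem_nhds (half_pos hδ))
  have hfar : L ∪ ⋃ i, K i ⊆ (ball y (δ / 2))ᶜ ∪ ⋃ i ∈ {i | δ / 2 ≤ ε i}, K i := by
    have hLfar : ∀ z ∈ L, δ ≤ dist z y := fun z hz ↦
      not_lt.1 fun hzy ↦ hball (mem_ball.2 hzy) hz
    rintro z (hz | hz)
    · exact .inl fun hzy ↦ (hLfar z hz).not_gt ((mem_ball.1 hzy).trans (half_lt_self hδ))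
    obtain ⟨i, hi⟩ := mem_iUnion.1 hz
    by_cases hεi : δ / 2 ≤ ε i
    · exact .inr (mem_biUnion hεi hi)
    · refine .inl fun hzy ↦ ?_
      linarith [hLfar (x i) (hx i), mem_ball.1 hzy, mem_closedBall.1 (hKx i hi),
        dist_triangle_left (x i) y z]
  have hclosed : IsClosed ((ball y (δ / 2))ᶜ ∪ ⋃ i ∈ {i | δ / 2 ≤ ε i}, K i) :=
    isOpen_ball.isClosed_compl.union (hfin.isClosed_biUnion fun i _ ↦ hK i)
  rcases closure_minimal hfar hclosed hy with hy | hy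
  · exact hy (mem_ball_self (half_pos hδ))
  · exact hyK (iUnion₂_subset_iUnion _ K hy)

lemma isClosed_union_range_of_mem_closedBall {X ι : Type*} [MetricSpace X] {L : Set X}
    {x y : ι → X} {ε : ι → ℝ} (hL : IsClosed L) (hx : ∀ i, x i ∈ L)
    (hy : ∀ i, y i ∈ closedBall (x i) (ε i)) (hε : Tendsto ε cofinite (𝓝 0)) :
    IsClosed (L ∪ range y) := by
  rw [← iUnion_singleton_eq_range]
  exact isClosed_union_iUnion_of_subset_closedBall hL (fun _ ↦ isClosed_singleton) hx
    (fun i ↦ singleton_subset_iff.2 (hy i)) hε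

lemma closure_iUnion_ball_subset_union {X ι : Type*} [PseudoMetricSpace X] {L G : Set X}
    {x y : ι → X} {r ε : ι → ℝ} (hL : IsClosed L) (hx : ∀ i, x i ∈ L)
    (hy : ∀ i, closedBall (y i) (r i) ⊆ G ∩ closedBall (x i) (ε i))
    (hε : Tendsto ε cofinite (𝓝 0)) : closure (⋃ i, ball (y i) (r i)) ⊆ L ∪ G :=
  calc closure (⋃ i, ball (y i) (r i))
      ⊆ L ∪ ⋃ i, closedBall (y i) (r i) :=
        closure_minimal
          ((iUnion_mono fun _ ↦ ball_subset_closedBall).trans subset_union_right)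
          (isClosed_union_iUnion_of_subset_closedBall hL (fun _ ↦ isClosed_closedBall) hx
            (fun i ↦ (hy i).trans inter_subset_right) hε)
    _ ⊆ L ∪ G :=
        union_subset_union_right L (iUnion_subset fun i ↦ (hy i).trans inter_subset_left)

lemma exists_closedBall_subset_of_accPt {X : Type*} [PseudoMetricSpace X] {x : X} {W : Set X}
    (hW : IsOpen W) (hx : AccPt x (𝓟 W)) {ε : ℝ} (hε : 0 < ε) :
    ∃ y ≠ x, ∃ r > 0, closedBall y r ⊆ W ∩ closedBall x ε := by
  obtain ⟨y, ⟨hyx, hyW⟩, hne⟩ := accPt_iff_nhds.1 hx (ball x ε) (ball_mem_nhds x hε)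
  obtain ⟨r, hr, hsub⟩ := nhds_basis_closedBall.mem_iff.1
    ((hW.inter isOpen_ball).mem_nhds ⟨hyW, hyx⟩)
  exact ⟨y, hne, r, hr, hsub.trans (inter_subset_inter_right W ball_subset_closedBall)⟩

lemma exists_closedBalls_accPt_of_countable {X : Type*} [PseudoMetricSpace X] {C W : Set X}
    (hC : C.Countable) (hW : IsOpen W) (hCW : ∀ x ∈ C, AccPt x (𝓟 W)) :
    ∃ (y : C × ℕ → X) (r ε : C × ℕ → ℝ), (∀ i, 0 < r i) ∧ Tendsto ε cofinite (𝓝 0) ∧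
      (∀ i, closedBall (y i) (r i) ⊆ W ∩ closedBall (i.1 : X) (ε i)) ∧
      ∀ x ∈ C, AccPt x (𝓟 (range y)) := by
  have := hC.to_subtype
  obtain ⟨ε, hεpos, hε⟩ := exists_pos_tendsto_cofinite_zero (C × ℕ)
  choose y hne r hr hsub using fun i : C × ℕ ↦
    exists_closedBall_subset_of_accPt hW (hCW i.1 i.1.2) (hεpos i)
  refine ⟨y, r, ε, hr, hε, hsub, fun x hx ↦ accPt_iff_nhds.2 fun V hV ↦ ?_⟩
  obtain ⟨δ, hδ, hball⟩ := Metric.mem_nhds_iff.1 hV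
  have hεx : Tendsto (fun k ↦ ε (⟨x, hx⟩, k)) cofinite (𝓝 0) :=
    hε.comp (Prod.mk_right_injective _).tendsto_cofinite
  obtain ⟨k, hk⟩ := (hεx.eventually (gt_mem_nhds hδ)).exists
  have hyx : y (⟨x, hx⟩, k) ∈ closedBall x (ε (⟨x, hx⟩, k)) :=
    (hsub _ (mem_closedBall_self (hr _).le)).2
  exact ⟨y (⟨x, hx⟩, k), ⟨hball (closedBall_subset_ball hk hyx), mem_range_self _⟩, hne _⟩

lemma CrowdingStage.exists_isRefinedBy {X : Type*} [MetricSpace X] {U G : Set X} (hG : IsOpen G)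
    (hUG : ∀ x ∈ U, AccPt x (𝓟 G)) (S : CrowdingStage U) : ∃ T, S.IsRefinedBy G T := by
  have hcount : (S.points ∩ S.region).Countable := S.countable_points.mono inter_subset_left
  obtain ⟨y, r, ε, hr, hε, hball, hacc⟩ := exists_closedBalls_accPt_of_countable
    hcount (S.isOpen_region.inter hG)
    fun x hx ↦ (hUG x (S.region_subset hx.2)).nhds_inter (S.isOpen_region.mem_nhds hx.2)
  have := hcount.to_subtype
  have hcenter : ∀ i, y i ∈ closedBall (y i) (r i) := fun i ↦ mem_closedBall_self (hr i).le
  have hrange : range y ⊆ ⋃ i, ball (y i) (r i) :=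
    range_subset_iff.2 fun i ↦ mem_iUnion.2 ⟨i, mem_ball_self (hr i)⟩
  have hregion : ⋃ i, ball (y i) (r i) ⊆ S.region :=
    iUnion_subset fun i z hz ↦ (hball i (ball_subset_closedBall hz)).1.1
  have hclosed : IsClosed (S.points ∪ range y) :=
    isClosed_union_range_of_mem_closedBall S.isClosed_points (fun i ↦ i.1.2.1)
      (fun i ↦ (hball i (hcenter i)).2) hε
  have hclosure : closure (⋃ i, ball (y i) (r i)) ⊆ S.points ∪ G :=
    closure_iUnion_ball_subset_union S.isClosed_points (fun i ↦ i.1.2.1)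
      (fun i ↦ (hball i).trans (inter_subset_inter_left _ inter_subset_right)) hε
  have haccPt : ∀ x ∈ S.points, AccPt x (𝓟 (S.points ∪ range y)) := fun x hx ↦ by
    by_cases hxS : x ∈ S.region
    · exact (hacc x ⟨hx, hxS⟩).mono (principal_mono.2 subset_union_right)
    · exact (S.accPt_points x ⟨hx, hxS⟩).mono (principal_mono.2 subset_union_left)
  let T : CrowdingStage U :=
    { points := S.points ∪ range y
      region := ⋃ i, ball (y i) (r i)
      countable_points := S.countable_points.union (countable_range y)
      isClosed_points := hclosed
      isOpen_region := isOpen_iUnion fun _ ↦ isOpen_ball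
      points_subset :=
        union_subset S.points_subset (hrange.trans (hregion.trans S.region_subset))
      region_subset := hregion.trans S.region_subset
      accPt_points := fun x hx ↦ haccPt x (hx.1.resolve_right fun h ↦ hx.2 (hrange h)) }
  exact ⟨T, subset_union_left, hregion, union_subset_union_right _ hrange, hclosure, haccPt⟩

section Hurewicz

open TopologicalSpace

variable {X : Type*} [TopologicalSpace X] [MetrizableSpace X]

lemma exists_perfect_countable_of_not_baireSpace (hX : ¬ BaireSpace X) :
    ∃ Q : Set X, Perfect Q ∧ Q.Countable ∧ Q.Nonempty := by
  let _ := metrizableSpaceMetric X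
  obtain ⟨G, U, hopen, hdense, hU, ⟨x, hxU⟩, hUG⟩ :=
    exists_isOpen_nonempty_disjoint_iInter_of_not_baireSpace hX
  obtain ⟨r, hr, hrU⟩ := nhds_basis_closedBall.mem_iff.1 (hU.mem_nhds hxU)
  have hballU : closure (ball x r) ⊆ U := closure_ball_subset_closedBall.trans hrU
  have hacc : ∀ n, ∀ z ∈ ball x r, AccPt z (𝓟 (G n)) := fun n z hz ↦
    accPt_of_notMem_iInter_of_dense hopen hdense
      (disjoint_left.1 hUG (hballU (subset_closure hz))) n
  obtain ⟨S, hS₀, hS⟩ := CrowdingStage.exists_seq_isRefinedBy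
    (.singleton isOpen_ball (mem_ball_self hr))
    fun n ↦ CrowdingStage.exists_isRefinedBy (hopen n) (hacc n)
  refine ⟨⋃ n, (S n).points, CrowdingStage.perfect_iUnion_points hS (hUG.mono_left hballU),
    countable_iUnion fun n ↦ (S n).countable_points, x, mem_iUnion.2 ⟨0, ?_⟩⟩
  rw [hS₀]
  exact mem_singleton x

lemma exists_perfect_countable_of_not_isCompletelyBaire (hX : ¬ IsCompletelyBaire X) :
    ∃ Q : Set X, Perfect Q ∧ Q.Countable ∧ Q.Nonempty := by
  rw [IsCompletelyBaire] at hX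
  push Not at hX
  obtain ⟨C, hC, hCB⟩ := hX
  obtain ⟨Q, hQ, hcount, hne⟩ := exists_perfect_countable_of_not_baireSpace hCB
  exact ⟨Subtype.val '' Q, perfect_image_of_isClosedEmbedding hQ hC.isClosedEmbedding_subtypeVal,
    hcount.image _, hne.image _⟩

end Hurewicz

lemma IsCompletelyBaire.baireSpace_of_isClosed_of_subset {X : Type*} [TopologicalSpace X]
    {C D : Set X} (hD : IsCompletelyBaire D) (hC : IsClosed C) (hCD : C ⊆ D) : BaireSpace C := by
  have := hD (Subtype.val ⁻¹' C) (hC.preimage continuous_subtype_val)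
  exact (IsEmbedding.subtypeVal.homeomorphOfSubsetRange
    (hCD.trans_eq Subtype.range_coe.symm)).baireSpace

lemma IsCDH.exists_homeomorph_image_subset {X : Type*} [TopologicalSpace X] (hX : IsCDH X)
    {A Q : Set X} (hA : A.Countable) (hdense : Dense A) (hQ : Q.Countable) :
    ∃ h : X ≃ₜ X, h '' Q ⊆ A := by
  obtain ⟨h, hh⟩ :=
    hX (A ∪ Q) A (hA.union hQ) (hdense.mono subset_union_left) hA hdense
  exact ⟨h, (image_mono subset_union_right).trans hh.subset⟩

/-- A separable metrizable space that is not completely Baire but has a dense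
completely Baire subspace is not countable dense homogeneous. -/
theorem statement2 {X : Type*} [TopologicalSpace X] [TopologicalSpace.SeparableSpace X]
    [TopologicalSpace.MetrizableSpace X]
    (h1 : ¬ IsCompletelyBaire X) (h2 : ∃ D : Set X, Dense D ∧ IsCompletelyBaire D) :
    ¬ IsCDH X := by
  let _ := TopologicalSpace.metrizableSpaceMetric X
  have := UniformSpace.secondCountable_of_separable X
  intro hX
  obtain ⟨D, hD, hDB⟩ := h2
  obtain ⟨A, hAD, hA, hAdense⟩ := hD.exists_countable_dense_subset
  obtain ⟨Q, hQ, hQcount, hQne⟩ := exists_perfect_countable_of_not_isCompletelyBaire h1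
  obtain ⟨h, hQA⟩ := hX.exists_homeomorph_image_subset hA hAdense hQcount
  have hP : Perfect (h '' Q) := perfect_image_of_isClosedEmbedding hQ h.isClosedEmbedding
  exact not_baireSpace_of_preperfect_of_countable hP.acc (hQcount.image h) (hQne.image h)
    (hDB.baireSpace_of_isClosed_of_subset hP.closed (hQA.trans hAD))
end

section
/- Every meager separable metrizable space has a countable dense Gδ subset. -/
/-!
Meagerness yields a decreasing sequence of dense open sets `W n` with empty intersection. The `m`-th
point of a dense sequence is the limit of points `x m k ∈ W (max m k)` as `k → ∞`, so the set `D` of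
all `x m k` is dense; and only finitely many of them lie outside any given `W n`. Hence `W n ∪ D`,
the union of `W n` and a finite set, is Gδ, and so is `D = ⋂ n, (W n ∪ D)`.
-/

open Set Filter Topology TopologicalSpace

section

variable {X : Type*} [TopologicalSpace X]

theorem exists_antitone_isOpen_dense_of_mem_residual {s : Set X} (hs : s ∈ residual X) :
    ∃ W : ℕ → Set X, Antitone W ∧ (∀ n, IsOpen (W n)) ∧ (∀ n, Dense (W n)) ∧ ⋂ n, W n ⊆ s := by
  obtain ⟨S, hopen, hdense, hcount, hsub⟩ := mem_residual_iff.1 hs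
  obtain ⟨f, hf⟩ := (hcount.insert univ).exists_eq_range (insert_nonempty univ S)
  have hf_open_dense : ∀ n, IsOpen (f n) ∧ Dense (f n) := by
    rw [← forall_mem_range (p := fun t ↦ IsOpen t ∧ Dense t), ← hf, forall_mem_insert]
    exact ⟨⟨isOpen_univ, dense_univ⟩, fun t ht ↦ ⟨hopen t ht, hdense t ht⟩⟩
  have hdissipate : ∀ n, dissipate f n = ⋂₀ (f '' Iic n) := fun n ↦ (sInter_image f (Iic n)).symm
  have hfinite : ∀ n, (f '' Iic n).Finite := fun n ↦ (finite_Iic n).image f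
  refine ⟨dissipate f, antitone_dissipate, fun n ↦ ?_, fun n ↦ ?_, ?_⟩
  · rw [hdissipate]
    exact (hfinite n).isOpen_sInter (forall_mem_image.2 fun k _ ↦ (hf_open_dense k).1)
  · rw [hdissipate]
    exact (hfinite n).dense_sInter (forall_mem_image.2 fun k _ ↦ (hf_open_dense k).1)
      (forall_mem_image.2 fun k _ ↦ (hf_open_dense k).2)
  · rw [iInter_dissipate, ← sInter_range, ← hf, sInter_insert, univ_inter]
    exact hsub

theorem exists_seq_tendsto_of_forall_mem_closure {p : X} [(𝓝 p).IsCountablyGenerated]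
    {S : ℕ → Set X} (hp : ∀ n, p ∈ closure (S n)) :
    ∃ x : ℕ → X, (∀ n, x n ∈ S n) ∧ Tendsto x atTop (𝓝 p) := by
  obtain ⟨b, hb⟩ := (𝓝 p).exists_antitone_basis
  choose x hxb hxS using fun n ↦ mem_closure_iff_nhds.1 (hp n) (b n) (hb.mem n)
  exact ⟨x, hxS, hb.tendsto hxb⟩

theorem exists_countable_dense_finite_sdiff [SeparableSpace X] [FirstCountableTopology X]
    {W : ℕ → Set X} (hanti : Antitone W) (hdense : ∀ n, Dense (W n)) :
    ∃ D : Set X, D.Countable ∧ Dense D ∧ ∀ n, (D \ W n).Finite := by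
  rcases isEmpty_or_nonempty X with _ | _
  · exact ⟨univ, countable_univ, dense_univ, fun _ ↦ toFinite _⟩
  choose x hxW hxlim using fun m ↦ exists_seq_tendsto_of_forall_mem_closure
    (p := denseSeq X m) fun k ↦ (hdense (max m k)).closure_eq ▸ mem_univ _
  refine ⟨range (Function.uncurry x), countable_range _, ?_, fun n ↦ ?_⟩
  · have hrange : range (denseSeq X) ⊆ closure (range (Function.uncurry x)) :=
      range_subset_iff.2 fun m ↦ mem_closure_of_tendsto (hxlim m) <|
        Eventually.of_forall fun k ↦ mem_range_self (m, k)
    exact dense_closure.1 ((denseRange_denseSeq X).mono hrange)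
  · refine (((finite_Iio n).prod (finite_Iio n)).image (Function.uncurry x)).subset ?_
    rintro _ ⟨⟨⟨m, k⟩, rfl⟩, hnot_mem⟩
    have hlt : max m k < n := lt_of_not_ge fun hle ↦ hnot_mem (hanti hle (hxW m k))
    exact mem_image_of_mem _ (max_lt_iff.1 hlt)

theorem isGδ_of_finite_sdiff [T1Space X] [FirstCountableTopology X] {ι : Sort*} [Countable ι]
    {W : ι → Set X} {D : Set X} (hW : ∀ i, IsGδ (W i)) (hsub : ⋂ i, W i ⊆ D)
    (hfin : ∀ i, (D \ W i).Finite) : IsGδ D := by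
  have hD : D = ⋂ i, W i ∪ D \ W i := by
    simp only [union_sdiff_self, ← iInter_union, union_eq_self_of_subset_left hsub]
  rw [hD]
  exact .iInter fun i ↦ (hW i).union (hfin i).isGδ

theorem statement3_general [SeparableSpace X] [FirstCountableTopology X] [T1Space X]
    (h : IsMeagre (univ : Set X)) : ∃ D : Set X, D.Countable ∧ Dense D ∧ IsGδ D := by
  obtain ⟨W, hanti, hopen, hdense, hinter⟩ := exists_antitone_isOpen_dense_of_mem_residual h
  obtain ⟨D, hcount, hD, hfin⟩ := exists_countable_dense_finite_sdiff hanti hdense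
  have hsub : ⋂ n, W n ⊆ D := hinter.trans (compl_univ.trans_subset (empty_subset D))
  exact ⟨D, hcount, hD, isGδ_of_finite_sdiff (fun n ↦ (hopen n).isGδ) hsub hfin⟩

end

/-- Every meager separable metrizable space has a countable dense Gδ subset. -/
theorem statement3 {X : Type*} [TopologicalSpace X] [TopologicalSpace.SeparableSpace X]
    [TopologicalSpace.MetrizableSpace X] (h : IsMeagre (Set.univ : Set X)) :
    ∃ D : Set X, D.Countable ∧ Dense D ∧ IsGδ D :=
  statement3_general h
end

section
/- Let X be a coanalytic subspace of the Cantor set 2^ω. Then X is Polish if and only if X^ω is countable dense homogeneous. -/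
/-!
If `X` is Polish and zero-dimensional, so is `X^ω`, and every nonempty clopen subset of `X^ω` maps
continuously onto every other one, because shifting finitely many coordinates away turns a cylinder
into the whole space. A back-and-forth through matched clopen partitions of vanishing mesh
therefore produces a homeomorphism taking one countable dense set onto another.

Conversely, let `X^ω` be CDH. Were it meagre (and `X` not a point), it would have a countable dense
Gδ set, so by homogeneity all its countable sets would be Gδ, although a countable dense subset of
a Cantor set inside `X^ω` is not. It follows that `X` is a Baire space. Its complement being
analytic, hence having the Baire property, `X` is then residual in its closure and so contains a
dense Polish subspace; so does `X^ω`, and homogeneity moves that subspace over any prescribed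
countable set. Thus every countable subset of `X` lies in a Polish subspace of `X`. On the other
hand, if a coanalytic set `X` is not Gδ, then, as in Hurewicz's theorem, `f : ℕ^ω → Xᶜ` restricts to
a nonempty closed set on which the image of each nonempty open set accumulates at a point of `X`. A
Gδ set containing countably many of these points meets the range of `f` by the Baire category
theorem, so it is not contained in `X`.
-/

open Set Filter Topology TopologicalSpace
open MeasureTheory (AnalyticSet)

/-! ### Zero-dimensional spaces -/

/-- A space is zero-dimensional if its clopen sets form a base of the topology. -/
def IsZeroDimensional (X : Type*) [TopologicalSpace X] : Prop :=
  IsTopologicalBasis {s : Set X | IsClopen s}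

namespace IsZeroDimensional

variable {X Y : Type*} [TopologicalSpace X] [TopologicalSpace Y]

lemma of_isInducing (hY : IsZeroDimensional Y) {f : X → Y} (hf : IsInducing f) :
    IsZeroDimensional X := by
  refine isTopologicalBasis_of_isOpen_of_nhds (fun s hs => hs.isOpen) fun x U hx hU => ?_
  obtain ⟨_, ⟨t, ht, rfl⟩, hxt, htU⟩ := (hY.isInducing hf).mem_nhds_iff.1 (hU.mem_nhds hx)
  exact ⟨f ⁻¹' t, IsClopen.preimage ht hf.continuous, hxt, htU⟩

lemma pi {ι : Type*} {X : ι → Type*} [∀ i, TopologicalSpace (X i)]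
    (hX : ∀ i, IsZeroDimensional (X i)) : IsZeroDimensional (∀ i, X i) := by
  refine isTopologicalBasis_of_isOpen_of_nhds (fun s hs => hs.isOpen) fun x U hx hU => ?_
  obtain ⟨I, u, hu, huU⟩ := isOpen_pi_iff.1 hU x hx
  choose! v hv hxv hvu using fun i (hi : i ∈ I) =>
    (hX i).mem_nhds_iff.1 ((hu i hi).1.mem_nhds (hu i hi).2)
  exact ⟨(I : Set ι).pi v, ⟨isClosed_set_pi fun i hi => (hv i hi).isClosed,
    isOpen_set_pi I.finite_toSet fun i hi => (hv i hi).isOpen⟩, hxv, (pi_mono hvu).trans huU⟩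

end IsZeroDimensional

/-- The fibres of the colouring `c` have diameter less than `ε`, in the sense that any two points
of the same colour are at distance less than `ε`. -/
def FibersDistLT {Y : Type*} [PseudoMetricSpace Y] (c : Y → ℕ) (ε : ℝ) : Prop :=
  ∀ ⦃x x'⦄, c x = c x' → dist x x' < ε

lemma FibersDistLT.mono {Y : Type*} [PseudoMetricSpace Y] {c c' : Y → ℕ} {ε ε' : ℝ}
    (h : FibersDistLT c ε) (hc : ∀ x x', c' x = c' x' → c x = c x') (hε : ε ≤ ε') :
    FibersDistLT c' ε' :=
  fun x x' hx => (h (hc x x' hx)).trans_le hε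

lemma exists_continuous_nat_of_isClopen_cover {Y : Type*} [TopologicalSpace Y] {s : ℕ → Set Y}
    (hs : ∀ n, IsClopen (s n)) (hcover : ∀ y, ∃ n, y ∈ s n) :
    ∃ q : Y → ℕ, Continuous q ∧ ∀ y, y ∈ s (q y) := by
  classical
  refine ⟨fun y => Nat.find (hcover y), continuous_discrete_rng.2 fun n => ?_,
    fun y => Nat.find_spec (hcover y)⟩
  have hfiber : (fun y => Nat.find (hcover y)) ⁻¹' {n} = s n ∩ ⋂ m ∈ Iio n, (s m)ᶜ := by
    ext y
    simp [Nat.find_eq_iff]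
  rw [hfiber]
  exact (hs n).isOpen.inter ((finite_Iio n).isOpen_biInter fun m _ => (hs m).compl.isOpen)

lemma IsZeroDimensional.exists_continuous_fibersDistLT {Y : Type*} [PseudoMetricSpace Y]
    [SecondCountableTopology Y] (hY : IsZeroDimensional Y) {ε : ℝ} (hε : 0 < ε) :
    ∃ q : Y → ℕ, Continuous q ∧ FibersDistLT q ε := by
  rcases isEmpty_or_nonempty Y with hempty | hne
  · exact ⟨fun _ => 0, continuous_const, fun x => hempty.elim x⟩
  choose s hs hxs hsball using fun x : Y =>
    hY.mem_nhds_iff.1 (Metric.ball_mem_nhds x (half_pos hε))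
  obtain ⟨D, hDcount, hD⟩ :=
    TopologicalSpace.countable_cover_nhds fun x => (hs x).isOpen.mem_nhds (hxs x)
  have hDne : D.Nonempty := nonempty_iff_ne_empty.2 fun hD0 =>
    empty_ne_univ (by simpa [hD0] using hD)
  obtain ⟨d, rfl⟩ := hDcount.exists_eq_range hDne
  obtain ⟨q, hq, hqs⟩ := exists_continuous_nat_of_isClopen_cover (fun n => hs (d n))
    fun y => by simpa [← hD] using mem_univ y
  refine ⟨q, hq, fun x x' hxx' => ?_⟩
  calc dist x x' ≤ dist x (d (q x)) + dist x' (d (q x)) := dist_triangle_right _ _ _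
    _ < ε / 2 + ε / 2 :=
      add_lt_add (hsball _ (hqs x)) (hsball _ (hxx' ▸ hqs x'))
    _ = ε := add_halves ε

/-! ### Back and forth along clopen partitions -/

/-- Every nonempty clopen subset of `Z` can be mapped continuously onto every nonempty clopen
subset of `Y`. The maps are defined on all of `Z`, which is no restriction for nonempty targets. -/
def ClopensMapOnto (Z Y : Type*) [TopologicalSpace Z] [TopologicalSpace Y] : Prop :=
  ∀ ⦃V : Set Z⦄ ⦃U : Set Y⦄, IsClopen V → IsClopen U → V.Nonempty → U.Nonempty →
    ∃ r : Z → Y, Continuous r ∧ r '' V = U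

lemma clopensMapOnto_pi_nat (X : Type*) [TopologicalSpace X] :
    ClopensMapOnto (ℕ → X) (ℕ → X) := by
  classical
  rintro V U hV hU ⟨v, hv⟩ ⟨u, hu⟩
  obtain ⟨I, w, hw, hwV⟩ := isOpen_pi_iff.1 hV.isOpen v hv
  obtain ⟨m, hm⟩ := I.exists_nat_subset_range
  -- `V` contains every sequence agreeing with `v` below `m`, so the shift by `m` maps it onto all
  -- of `ℕ → X`.
  let retract : (ℕ → X) → (ℕ → X) := fun y => if y ∈ U then y else u
  have hretract : Continuous retract :=
    continuous_if (fun a ha => by simp [hU.frontier_eq] at ha) continuous_id.continuousOn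
      continuous_const.continuousOn
  have hmem : ∀ y, retract y ∈ U := fun y => by
    by_cases hy : y ∈ U <;> simp [retract, hy, hu]
  refine ⟨fun y => retract fun i => y (m + i), by fun_prop,
    Subset.antisymm (image_subset_iff.2 fun y _ => hmem _) fun x hx => ?_⟩
  refine ⟨fun i => if i < m then v i else x (i - m), hwV fun i hi => ?_, ?_⟩
  · simpa [Finset.mem_range.1 (hm hi)] using (hw i hi).2
  · simp [retract, hx]

lemma ClopensMapOnto.exists_image_eq {Z Y : Type*} [TopologicalSpace Z] [TopologicalSpace Y]
    (h : ClopensMapOnto Z Y) {V : Set Z} {U : Set Y} (hV : IsClopen V) (hU : IsClopen U) {v : Z}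
    {u : Y} (hv : v ∈ V) (hu : u ∈ U) {q : Y → ℕ} (hq : Continuous q) :
    ∃ g : Z → ℕ, Continuous g ∧ g '' V = q '' U ∧ g v = q u := by
  obtain ⟨r, hr, rfl⟩ := h hV hU ⟨v, hv⟩ ⟨u, hu⟩
  let σ := Equiv.swap (q u) (q (r v))
  have hσ : σ '' (q '' (r '' V)) = q '' (r '' V) := by
    refine (Equiv.swap_bijOn_self ?_).image_eq
    exact iff_of_true (mem_image_of_mem q hu) (mem_image_of_mem q (mem_image_of_mem r hv))
  refine ⟨σ ∘ q ∘ r, continuous_of_discreteTopology.comp (hq.comp hr), ?_, ?_⟩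
  · rw [image_comp, image_comp, hσ]
  · simp [σ]

lemma continuous_apply_of_discrete {Z ι W : Type*} [TopologicalSpace Z] [TopologicalSpace ι]
    [DiscreteTopology ι] [TopologicalSpace W] {c : Z → ι} (hc : Continuous c) {g : ι → Z → W}
    (hg : ∀ z, Continuous (g (c z))) : Continuous fun z => g (c z) z := by
  refine continuous_iff_continuousAt.2 fun z => (hg z).continuousAt.congr ?_
  filter_upwards [((IsLocallyConstant.iff_continuous c).2 hc).eventually_eq z] with z' hz'
  rw [hz']

/-- A finite stage of the back-and-forth construction of a homeomorphism `Y ≃ₜ Z` taking `A` to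
`B`: clopen partitions of `Y` and of `Z`, given by continuous colourings with the same set of
colours, together with marked pairs in `A ×ˢ B` that the homeomorphism has to respect. Two marked
points lie in pieces of the same colour, and each piece contains at most one marked point. -/
structure ClopenMatching {Y Z : Type*} [TopologicalSpace Y] [TopologicalSpace Z]
    (A : Set Y) (B : Set Z) where
  left : Y → ℕ
  right : Z → ℕ
  continuous_left : Continuous left
  continuous_right : Continuous right
  range_eq : range left = range right
  pairs : Set (Y × Z)
  pairs_subset : pairs ⊆ A ×ˢ B
  left_eq_right : ∀ p ∈ pairs, left p.1 = right p.2
  injOn_left : InjOn (fun p => left p.1) pairs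

namespace ClopenMatching

section Topological

variable {Y Z : Type*} [TopologicalSpace Y] [TopologicalSpace Z] {A : Set Y} {B : Set Z}

/-- The matching with the roles of the two spaces exchanged. -/
def swap (M : ClopenMatching A B) : ClopenMatching B A where
  left := M.right
  right := M.left
  continuous_left := M.continuous_right
  continuous_right := M.continuous_left
  range_eq := M.range_eq.symm
  pairs := Prod.swap ⁻¹' M.pairs
  pairs_subset _ hp := (M.pairs_subset hp).symm
  left_eq_right _ hp := (M.left_eq_right _ hp).symm
  injOn_left _ hp _ hp' h := Prod.swap_injective <| M.injOn_left hp hp' <|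
    (M.left_eq_right _ hp).trans (h.trans (M.left_eq_right _ hp').symm)

/-- `M ≤ N` if `N` refines the partitions of `M` and their matching, and marks at least the pairs
that `M` marks. -/
instance : Preorder (ClopenMatching A B) where
  le M N := (∀ y z, N.left y = N.right z → M.left y = M.right z) ∧ M.pairs ⊆ N.pairs
  le_refl M := ⟨fun _ _ => id, Subset.rfl⟩
  le_trans _ _ _ h h' := ⟨fun y z hyz => h.1 y z (h'.1 y z hyz), h.2.trans h'.2⟩

/-- The matching with a single piece on each side and no marked pair. -/
def trivial [Nonempty Y] [Nonempty Z] (A : Set Y) (B : Set Z) : ClopenMatching A B where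
  left _ := 0
  right _ := 0
  continuous_left := continuous_const
  continuous_right := continuous_const
  range_eq := by simp
  pairs := ∅
  pairs_subset := empty_subset _
  left_eq_right := by simp
  injOn_left := injOn_empty _

variable {M N : ClopenMatching A B}

lemma swap_le_swap (h : M ≤ N) : M.swap ≤ N.swap :=
  ⟨fun z y hzy => (h.1 y z hzy.symm).symm, preimage_mono h.2⟩

lemma exists_right_eq (M : ClopenMatching A B) (y : Y) : ∃ z, M.right z = M.left y :=
  M.range_eq.subset (mem_range_self y)

lemma left_eq_of_le (h : M ≤ N) {y y' : Y} (hyy' : N.left y = N.left y') :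
    M.left y = M.left y' := by
  obtain ⟨z, hz⟩ := N.exists_right_eq y
  exact (h.1 y z hz.symm).trans (h.1 y' z (hyy' ▸ hz.symm)).symm

lemma isClopen_left_fiber (M : ClopenMatching A B) (i : ℕ) : IsClopen (M.left ⁻¹' {i}) :=
  (isClopen_discrete _).preimage M.continuous_left

lemma isClopen_right_fiber (M : ClopenMatching A B) (i : ℕ) : IsClopen (M.right ⁻¹' {i}) :=
  M.swap.isClopen_left_fiber i

lemma exists_recoloring (hZY : ClopensMapOnto Z Y) (M : ClopenMatching A B) {q : Y → ℕ}
    (hq : Continuous q) {i : ℕ} (hi : i ∈ range M.left) :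
    ∃ g : Z → ℕ, Continuous g ∧ g '' (M.right ⁻¹' {i}) = q '' (M.left ⁻¹' {i}) ∧
      ∀ p ∈ M.pairs, M.left p.1 = i → g p.2 = q p.1 := by
  obtain ⟨y, z, hy, hz, hmark⟩ : ∃ y z, M.left y = i ∧ M.right z = i ∧
      ∀ p ∈ M.pairs, M.left p.1 = i → p = (y, z) := by
    by_cases hp : ∃ p ∈ M.pairs, M.left p.1 = i
    · obtain ⟨p, hpM, hpi⟩ := hp
      exact ⟨p.1, p.2, hpi, M.left_eq_right p hpM ▸ hpi,
        fun p' hp'M hp'i => M.injOn_left hp'M hpM (hp'i.trans hpi.symm)⟩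
    · obtain ⟨y, rfl⟩ := hi
      obtain ⟨z, hz⟩ := M.exists_right_eq y
      exact ⟨y, z, rfl, hz, fun p hpM hpi => (hp ⟨p, hpM, hpi⟩).elim⟩
  obtain ⟨g, hg, himage, hgz⟩ := hZY.exists_image_eq (M.isClopen_right_fiber i)
    (M.isClopen_left_fiber i) hz hy hq
  exact ⟨g, hg, himage, fun p hpM hpi => by rw [hmark p hpM hpi, hgz]⟩

lemma exists_ge_refining (hZY : ClopensMapOnto Z Y) (M : ClopenMatching A B) {q : Y → ℕ}
    (hq : Continuous q) :
    ∃ N ≥ M, N.pairs = M.pairs ∧ ∀ y y', N.left y = N.left y' → q y = q y' := by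
  choose! g hg himage hmark using fun i (hi : i ∈ range M.left) => M.exists_recoloring hZY hq hi
  have hright : ∀ z, M.right z ∈ range M.left := fun z => M.range_eq.superset (mem_range_self z)
  have hpair : Continuous (Function.uncurry Nat.pair) := continuous_of_discreteTopology
  let N : ClopenMatching A B :=
    { left := fun y => Nat.pair (M.left y) (q y)
      right := fun z => Nat.pair (M.right z) (g (M.right z) z)
      continuous_left := hpair.comp (M.continuous_left.prodMk hq)
      continuous_right := hpair.comp (M.continuous_right.prodMk
        (continuous_apply_of_discrete M.continuous_right fun z => hg _ (hright z)))
      range_eq := by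
        apply Subset.antisymm
        · rintro _ ⟨y, rfl⟩
          obtain ⟨z, hz, hgz⟩ := (himage _ (mem_range_self y)).superset (mem_image_of_mem q rfl)
          exact ⟨z, congrArg₂ Nat.pair hz (hz ▸ hgz)⟩
        · rintro _ ⟨z, rfl⟩
          obtain ⟨y, hy, hqy⟩ := (himage _ (hright z)).subset (mem_image_of_mem _ rfl)
          exact ⟨y, congrArg₂ Nat.pair hy hqy⟩
      pairs := M.pairs
      pairs_subset := M.pairs_subset
      left_eq_right := fun p hp => by
        rw [← M.left_eq_right p hp, hmark _ (mem_range_self _) p hp rfl]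
      injOn_left := fun p hp p' hp' h => M.injOn_left hp hp' (Nat.pair_eq_pair.1 h).1 }
  exact ⟨N, ⟨fun y z h => (Nat.pair_eq_pair.1 h).1, Subset.rfl⟩, rfl,
    fun y y' h => (Nat.pair_eq_pair.1 h).2⟩

lemma exists_ge_marking (hB : Dense B) (M : ClopenMatching A B) {a : Y} (ha : a ∈ A)
    (hmark : ∀ p ∈ M.pairs, M.left p.1 = M.left a → p.1 = a) :
    ∃ N ≥ M, N.left = M.left ∧ ∃ b, (a, b) ∈ N.pairs := by
  by_cases hp : ∃ p ∈ M.pairs, M.left p.1 = M.left a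
  · obtain ⟨p, hpM, hpa⟩ := hp
    exact ⟨M, le_rfl, rfl, p.2, hmark p hpM hpa ▸ hpM⟩
  · push Not at hp
    obtain ⟨b, hab, hb⟩ := hB.exists_mem_open (M.isClopen_right_fiber (M.left a)).isOpen
      (M.exists_right_eq a)
    let N : ClopenMatching A B :=
      { M with
        pairs := insert (a, b) M.pairs
        pairs_subset := insert_subset ⟨ha, hab⟩ M.pairs_subset
        left_eq_right := forall_mem_insert.2 ⟨hb.symm, M.left_eq_right⟩
        injOn_left := (injOn_insert fun h => hp _ h rfl).2
          ⟨M.injOn_left, fun ⟨p, hpM, hpa⟩ => hp p hpM hpa⟩ }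
    exact ⟨N, ⟨fun _ _ => id, subset_insert _ _⟩, rfl, b, mem_insert _ _⟩

end Topological

section Metric

variable {Y Z : Type*} [MetricSpace Y] [MetricSpace Z] {A : Set Y} {B : Set Z}

lemma exists_ge_fibersDistLT_left [SecondCountableTopology Y] (hY : IsZeroDimensional Y)
    (hZY : ClopensMapOnto Z Y) (hB : Dense B) (M : ClopenMatching A B) {a : Y} (ha : a ∈ A)
    {ε : ℝ} (hε : 0 < ε) :
    ∃ N ≥ M, FibersDistLT N.left ε ∧ ∃ b, (a, b) ∈ N.pairs := by
  obtain ⟨δ, hδ, hδε, hδmark⟩ : ∃ δ > 0, δ ≤ ε ∧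
      ∀ p ∈ M.pairs, M.left p.1 = M.left a → dist p.1 a < δ → p.1 = a := by
    by_cases hp : ∃ p ∈ M.pairs, M.left p.1 = M.left a ∧ p.1 ≠ a
    · obtain ⟨p, hpM, hpa, hne⟩ := hp
      refine ⟨min ε (dist p.1 a), lt_min hε (dist_pos.2 hne), min_le_left _ _,
        fun p' hp'M hp'a hlt => ?_⟩
      rw [M.injOn_left hp'M hpM (hp'a.trans hpa.symm)] at hlt
      exact absurd (hlt.trans_le (min_le_right _ _)) (lt_irrefl _)
    · push Not at hp
      exact ⟨ε, hε, le_rfl, fun p hpM hpa _ => hp p hpM hpa⟩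
  obtain ⟨q, hq, hqδ⟩ := hY.exists_continuous_fibersDistLT hδ
  obtain ⟨N, hMN, hpairs, hNq⟩ := M.exists_ge_refining hZY hq
  obtain ⟨N', hNN', hleft, hab⟩ := N.exists_ge_marking hB ha fun p hpN hpa =>
    hδmark p (hpairs ▸ hpN) (left_eq_of_le hMN hpa) (hqδ (hNq _ _ hpa))
  exact ⟨N', hMN.trans hNN', hleft ▸ hqδ.mono hNq hδε, hab⟩

lemma exists_ge_fibersDistLT [SecondCountableTopology Y] [SecondCountableTopology Z]
    (hY : IsZeroDimensional Y) (hZ : IsZeroDimensional Z)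
    (hZY : ClopensMapOnto Z Y) (hYZ : ClopensMapOnto Y Z) (hA : Dense A) (hB : Dense B)
    (M : ClopenMatching A B) {a : Y} (ha : a ∈ A) {b : Z} (hb : b ∈ B) {ε : ℝ} (hε : 0 < ε) :
    ∃ N ≥ M, FibersDistLT N.left ε ∧ FibersDistLT N.right ε ∧
      (∃ b', (a, b') ∈ N.pairs) ∧ ∃ a', (a', b) ∈ N.pairs := by
  obtain ⟨N, hMN, hleft, b', hab'⟩ := M.exists_ge_fibersDistLT_left hY hZY hB ha hε
  obtain ⟨N', hNN', hright, a', ha'b⟩ := N.swap.exists_ge_fibersDistLT_left hZ hYZ hA hb hε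
  have hNN' : N ≤ N'.swap := swap_le_swap hNN'
  exact ⟨N'.swap, hMN.trans hNN', hleft.mono (fun _ _ => left_eq_of_le hNN') le_rfl, hright,
    ⟨b', hNN'.2 hab'⟩, a', ha'b⟩

variable {M : ℕ → ClopenMatching A B}

lemma exists_forall_left_eq_right [CompleteSpace Z] (hM : Monotone M)
    (hright : ∀ n : ℕ, FibersDistLT (M n).right (1 / (n + 1))) (y : Y) :
    ∃ z, ∀ n, (M n).left y = (M n).right z := by
  let s : ℕ → Set Z := fun n => (M n).right ⁻¹' {(M n).left y}
  have hdist : ∀ n, ∀ z ∈ s n, ∀ z' ∈ s n, dist z z' ≤ 1 / (n + 1) :=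
    fun n z hz z' hz' => (hright n (hz.trans hz'.symm)).le
  have hs : ∀ N, (⋂ n ≤ N, s n).Nonempty := fun N => by
    obtain ⟨z, hz⟩ := (M N).exists_right_eq y
    exact ⟨z, mem_iInter₂.2 fun n hn => ((hM hn).1 y z hz.symm).symm⟩
  have hdiam : Tendsto (fun n => Metric.diam (s n)) atTop (𝓝 0) :=
    squeeze_zero (fun _ => Metric.diam_nonneg)
      (fun n => Metric.diam_le_of_forall_dist_le (by positivity) (hdist n))
      tendsto_one_div_add_atTop_nhds_zero_nat
  obtain ⟨z, hz⟩ := Metric.nonempty_iInter_of_nonempty_biInter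
    (fun n => ((M n).isClopen_right_fiber _).isClosed)
    (fun n => Metric.isBounded_iff.2 ⟨_, hdist n⟩) hs hdiam
  exact ⟨z, fun n => (mem_iInter.1 hz n).symm⟩

lemma eq_of_forall_right_eq (hright : ∀ n : ℕ, FibersDistLT (M n).right (1 / (n + 1)))
    {z z' : Z} (h : ∀ n, (M n).right z = (M n).right z') : z = z' := by
  refine dist_le_zero.1 (le_of_forall_pos_le_add fun ε hε => ?_)
  obtain ⟨n, hn⟩ := exists_nat_one_div_lt hε
  linarith [hright n (h n)]

lemma continuous_of_forall_left_eq_right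
    (hright : ∀ n : ℕ, FibersDistLT (M n).right (1 / (n + 1))) {h : Y → Z}
    (hh : ∀ y n, (M n).left y = (M n).right (h y)) : Continuous h := by
  refine Metric.continuous_iff'.2 fun y ε hε => ?_
  obtain ⟨n, hn⟩ := exists_nat_one_div_lt hε
  filter_upwards [((IsLocallyConstant.iff_continuous _).2 (M n).continuous_left).eventually_eq y]
    with y' hy'
  exact (hright n (by rw [← hh, ← hh, hy'])).trans hn

lemma exists_homeomorph_of_monotone [CompleteSpace Y] [CompleteSpace Z] (hM : Monotone M)
    (hleft : ∀ n : ℕ, FibersDistLT (M n).left (1 / (n + 1)))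
    (hright : ∀ n : ℕ, FibersDistLT (M n).right (1 / (n + 1))) :
    ∃ h : Y ≃ₜ Z, ∀ n, ∀ p ∈ (M n).pairs, h p.1 = p.2 := by
  choose h hh using exists_forall_left_eq_right hM hright
  choose k hk using exists_forall_left_eq_right (M := fun n => (M n).swap)
    (fun _ _ hmn => swap_le_swap (hM hmn)) hleft
  refine ⟨⟨⟨h, k, fun y => ?_, fun z => ?_⟩, continuous_of_forall_left_eq_right hright hh,
    continuous_of_forall_left_eq_right (M := fun n => (M n).swap) hleft hk⟩, fun n p hp => ?_⟩
  · exact eq_of_forall_right_eq (M := fun n => (M n).swap) hleft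
      fun n => ((hh y n).trans (hk (h y) n)).symm
  · exact eq_of_forall_right_eq hright fun n => ((hk z n).trans (hh (k z) n)).symm
  · refine eq_of_forall_right_eq hright fun m => (hh p.1 m).symm.trans ?_
    have hp' : p ∈ (M (max m n)).pairs := (hM (le_max_right m n)).2 hp
    exact (hM (le_max_left m n)).1 _ _ ((M (max m n)).left_eq_right p hp')

end Metric

end ClopenMatching

lemma exists_monotone_seq {α : Type*} [Preorder α] [Nonempty α] {P : ℕ → α → Prop}
    (h : ∀ n a, ∃ b ≥ a, P n b) : ∃ u : ℕ → α, Monotone u ∧ ∀ n, P n (u n) := by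
  choose next hge hP using h
  let u : ℕ → α := Nat.rec (next 0 (Classical.arbitrary α)) fun n => next (n + 1)
  refine ⟨u, monotone_nat_of_le_succ fun n => hge _ _, fun n => ?_⟩
  cases n with
  | zero => exact hP _ _
  | succ n => exact hP _ _

theorem exists_homeomorph_image_eq_of_dense {Y Z : Type*} [TopologicalSpace Y] [TopologicalSpace Z]
    [PolishSpace Y] [PolishSpace Z] (hY : IsZeroDimensional Y) (hZ : IsZeroDimensional Z)
    (hZY : ClopensMapOnto Z Y) (hYZ : ClopensMapOnto Y Z) {A : Set Y} {B : Set Z}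
    (hAcount : A.Countable) (hA : Dense A) (hBcount : B.Countable) (hB : Dense B)
    (hAne : A.Nonempty) (hBne : B.Nonempty) : ∃ h : Y ≃ₜ Z, h '' A = B := by
  let _ := upgradeIsCompletelyMetrizable Y
  let _ := upgradeIsCompletelyMetrizable Z
  have : Nonempty (ClopenMatching A B) :=
    ⟨@ClopenMatching.trivial _ _ _ _ hAne.to_type hBne.to_type A B⟩
  obtain ⟨a, rfl⟩ := hAcount.exists_eq_range hAne
  obtain ⟨b, rfl⟩ := hBcount.exists_eq_range hBne
  obtain ⟨M, hM, hMn⟩ := exists_monotone_seq fun n (M : ClopenMatching (range a) (range b)) =>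
    M.exists_ge_fibersDistLT hY hZ hZY hYZ hA hB (mem_range_self n) (mem_range_self n)
      (Nat.one_div_pos_of_nat (α := ℝ) (n := n))
  choose hleft hright hpaira hpairb using hMn
  obtain ⟨h, hh⟩ := ClopenMatching.exists_homeomorph_of_monotone hM hleft hright
  refine ⟨h, Subset.antisymm ?_ ?_⟩
  · rintro _ ⟨_, ⟨n, rfl⟩, rfl⟩
    obtain ⟨b', hab'⟩ := hpaira n
    exact hh n _ hab' ▸ ((M n).pairs_subset hab').2
  · rintro _ ⟨n, rfl⟩
    obtain ⟨a', ha'b⟩ := hpairb n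
    exact ⟨a', ((M n).pairs_subset ha'b).1, hh n _ ha'b⟩

theorem IsZeroDimensional.isCDH_pi_nat {X : Type*} [TopologicalSpace X] [PolishSpace X]
    (hX : IsZeroDimensional X) : IsCDH (ℕ → X) := by
  intro A B hAcount hA hBcount hB
  rcases isEmpty_or_nonempty X with hempty | hne
  · exact ⟨.refl _, Subsingleton.elim _ _⟩
  · have hpi : IsZeroDimensional (ℕ → X) := .pi fun _ => hX
    exact exists_homeomorph_image_eq_of_dense hpi hpi (clopensMapOnto_pi_nat X)
      (clopensMapOnto_pi_nat X) hAcount hA hBcount hB hA.nonempty hB.nonempty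

/-! ### The Baire property of analytic sets -/

lemma isMeagre_closure_sdiff_of_isOpen {X : Type*} [TopologicalSpace X] {U : Set X}
    (hU : IsOpen U) : IsMeagre (closure U \ U) := by
  filter_upwards [(closure_residualEq hU.isLocallyClosed).mem_iff] with x hx hxU
  exact hxU.2 (hx.1 hxU.1)

lemma isMeagre_sdiff_interior_of_isClosed {X : Type*} [TopologicalSpace X] {C : Set X}
    (hC : IsClosed C) : IsMeagre (C \ interior C) := by
  have h := isMeagre_closure_sdiff_of_isOpen hC.isOpen_compl
  rwa [closure_compl, sdiff_compl, inter_comm, ← sdiff_eq] at h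

/-- The set of points at which `S` is locally nonmeagre. -/
def nonmeagreLocus {X : Type*} [TopologicalSpace X] (S : Set X) : Set X :=
  {x | ∀ U ∈ 𝓝 x, ¬ IsMeagre (S ∩ U)}

section NonmeagreLocus

variable {X : Type*} [TopologicalSpace X]

lemma notMem_nonmeagreLocus_iff {S : Set X} {x : X} :
    x ∉ nonmeagreLocus S ↔ ∃ U ∈ 𝓝 x, IsMeagre (S ∩ U) := by
  simp [nonmeagreLocus]

lemma isClosed_nonmeagreLocus (S : Set X) : IsClosed (nonmeagreLocus S) := by
  refine isOpen_compl_iff.1 (isOpen_iff_mem_nhds.2 fun x hx => ?_)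
  obtain ⟨U, hU, hSU⟩ := notMem_nonmeagreLocus_iff.1 hx
  filter_upwards [eventually_mem_nhds_iff.2 hU] with y hy
  exact notMem_nonmeagreLocus_iff.2 ⟨U, hy, hSU⟩

lemma nonmeagreLocus_subset_closure (S : Set X) : nonmeagreLocus S ⊆ closure S := fun x hx =>
  mem_closure_iff_nhds.2 fun U hU => by
    simpa only [inter_comm] using nonempty_of_not_isMeagre (hx U hU)

variable [HereditarilyLindelofSpace X]

lemma isMeagre_sdiff_nonmeagreLocus (S : Set X) : IsMeagre (S \ nonmeagreLocus S) := by
  refine (HereditarilyLindelofSpace.isLindelof _).compl_mem_sets_of_nhdsWithin fun x hx => ?_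
  obtain ⟨U, hU, hSU⟩ := notMem_nonmeagreLocus_iff.1 hx.2
  exact ⟨S ∩ U, inter_mem (mem_of_superset self_mem_nhdsWithin sdiff_subset)
    (mem_nhdsWithin_of_mem_nhds hU), hSU⟩

lemma isMeagre_nonmeagreLocus_iUnion_sdiff (S : ℕ → Set X) :
    IsMeagre (nonmeagreLocus (⋃ n, S n) \ ⋃ n, nonmeagreLocus (S n)) := by
  let O := ⋃ n, interior (nonmeagreLocus (S n))
  have hlocus : nonmeagreLocus (⋃ n, S n) ⊆ closure O := fun x hx => by
    by_contra hxO
    refine hx _ (isClosed_closure.isOpen_compl.mem_nhds hxO) ?_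
    have hcover : (⋃ n, S n) ∩ (closure O)ᶜ ⊆ ⋃ n, (S n \ nonmeagreLocus (S n)) ∪
        (nonmeagreLocus (S n) \ interior (nonmeagreLocus (S n))) := by
      rintro y ⟨hy, hyO⟩
      obtain ⟨n, hn⟩ := mem_iUnion.1 hy
      have hyint : y ∉ interior (nonmeagreLocus (S n)) :=
        fun h => hyO (subset_closure (mem_iUnion_of_mem n h))
      by_cases h : y ∈ nonmeagreLocus (S n)
      · exact mem_iUnion_of_mem n (Or.inr ⟨h, hyint⟩)
      · exact mem_iUnion_of_mem n (Or.inl ⟨hn, h⟩)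
    exact (isMeagre_iUnion fun n => (isMeagre_sdiff_nonmeagreLocus _).union
      (isMeagre_sdiff_interior_of_isClosed (isClosed_nonmeagreLocus _))).mono hcover
  exact (isMeagre_closure_sdiff_of_isOpen (isOpen_iUnion fun n => isOpen_interior)).mono
    (sdiff_subset_sdiff hlocus (iUnion_mono fun n => interior_subset))

end NonmeagreLocus

lemma eq_of_forall_mem_closure_image_cylinder {X : Type*} [TopologicalSpace X] [T2Space X]
    {f : (ℕ → ℕ) → X} (hf : Continuous f) {x : X} {y : ℕ → ℕ}
    (h : ∀ n, x ∈ closure (f '' PiNat.cylinder y n)) : x = f y := by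
  by_contra hne
  obtain ⟨U, V, hU, hV, hxU, hyV, hUV⟩ := t2_separation hne
  obtain ⟨_, ⟨z, n, rfl⟩, hyz, hnV⟩ := (PiNat.isTopologicalBasis_cylinders _).mem_nhds_iff.1
    ((hV.preimage hf).mem_nhds hyV)
  rw [← PiNat.mem_cylinder_iff_eq.1 hyz] at hnV
  obtain ⟨_, hwU, w, hw, rfl⟩ := mem_closure_iff.1 (h n) U hU hxU
  exact disjoint_left.1 hUV hwU (hnV hw)

lemma exists_forall_res_of_nil {p : List ℕ → Prop} (hnil : p [])
    (hcons : ∀ s, p s → ∃ n, p (n :: s)) : ∃ y : ℕ → ℕ, ∀ n, p (PiNat.res y n) := by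
  choose! next hnext using hcons
  let s : ℕ → List ℕ := Nat.rec [] fun _ s => next s :: s
  have hs : ∀ n, PiNat.res (fun k => next (s k)) n = s n := fun n => by
    induction n with
    | zero => rfl
    | succ n ih => rw [PiNat.res_succ, ih]
  refine ⟨fun k => next (s k), fun n => hs n ▸ ?_⟩
  induction n with
  | zero => exact hnil
  | succ n ih => exact hnext _ ih

lemma isMeagre_nonmeagreLocus_range_sdiff {X : Type*} [TopologicalSpace X] [T2Space X]
    [HereditarilyLindelofSpace X] {f : (ℕ → ℕ) → X} (hf : Continuous f) :
    IsMeagre (nonmeagreLocus (range f) \ range f) := by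
  let F : List ℕ → Set X := fun s => f '' {y | PiNat.res y s.length = s}
  have hF : ∀ s, F s = ⋃ n, F (n :: s) := fun s => by
    simp only [F, ← image_iUnion]
    congr 1
    ext y
    simp [PiNat.res_succ]
  have hmeagre : IsMeagre (⋃ s, nonmeagreLocus (F s) \ ⋃ n, nonmeagreLocus (F (n :: s))) :=
    isMeagre_iUnion fun s => by
      rw [hF s]
      exact isMeagre_nonmeagreLocus_iUnion_sdiff _
  refine hmeagre.mono fun x ⟨hx, hxf⟩ => ?_
  by_contra hbranch
  simp only [mem_iUnion, Set.mem_sdiff, not_exists, not_and, not_forall, not_not] at hbranch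
  obtain ⟨y, hy⟩ := exists_forall_res_of_nil (p := fun s => x ∈ nonmeagreLocus (F s))
    (by simpa [F] using hx) hbranch
  refine hxf ⟨y, (eq_of_forall_mem_closure_image_cylinder hf fun n => ?_).symm⟩
  have hFy : F (PiNat.res y n) = f '' PiNat.cylinder y n := by
    simp only [F, PiNat.res_length, PiNat.cylinder_eq_res]
  exact hFy ▸ nonmeagreLocus_subset_closure _ (hy n)

theorem baireMeasurableSet_of_analyticSet {X : Type*} [TopologicalSpace X] [T2Space X]
    [HereditarilyLindelofSpace X] {S : Set X} (hS : AnalyticSet S) : BaireMeasurableSet S := by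
  rw [AnalyticSet] at hS
  obtain rfl | ⟨f, hf, rfl⟩ := hS
  · exact IsMeagre.empty.baireMeasurableSet
  have hlocus : nonmeagreLocus (range f) =ᵇ range f := by
    filter_upwards [isMeagre_nonmeagreLocus_range_sdiff hf, isMeagre_sdiff_nonmeagreLocus (range f)]
      with x hx hx'
    exact propext ⟨fun h => by_contra fun h' => hx ⟨h, h'⟩,
      fun h => by_contra fun h' => hx' ⟨h, h'⟩⟩
  exact (isClosed_nonmeagreLocus _).isOpen_compl.baireMeasurableSet.of_compl.congr hlocus

/-! ### Polish subspaces -/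

lemma polishSpace_range_of_isEmbedding {X Y : Type*} [TopologicalSpace X] [TopologicalSpace Y]
    [PolishSpace X] {f : X → Y} (hf : IsEmbedding f) : PolishSpace (range f) :=
  hf.toHomeomorph.symm.isClosedEmbedding.polishSpace

lemma polishSpace_image_iff {X Y : Type*} [TopologicalSpace X] [TopologicalSpace Y]
    {f : X → Y} (hf : IsEmbedding f) {s : Set X} : PolishSpace (f '' s) ↔ PolishSpace s :=
  ⟨fun _ => (hf.homeomorphImage s).isClosedEmbedding.polishSpace,
    fun _ => (hf.homeomorphImage s).symm.isClosedEmbedding.polishSpace⟩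

lemma polishSpace_iInter {X : Type*} [TopologicalSpace X] [T2Space X] {s : ℕ → Set X}
    [∀ n, PolishSpace (s n)] : PolishSpace (⋂ n, s n) := by
  let diag : (⋂ n, s n) → ∀ n, s n := fun x n => ⟨x, mem_iInter.1 x.2 n⟩
  have hdiag : IsEmbedding diag :=
    .of_comp (by fun_prop) (g := fun p => (p 0 : X)) (by fun_prop) .subtypeVal
  have hrange : range diag = ⋂ n, {p : ∀ n, s n | (p n : X) = p 0} := by
    ext p
    refine ⟨?_, fun hp => ?_⟩
    · rintro ⟨x, rfl⟩
      exact mem_iInter.2 fun n => rfl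
    · rw [mem_iInter] at hp
      exact ⟨⟨p 0, mem_iInter.2 fun n => hp n ▸ (p n).2⟩, funext fun n => Subtype.ext (hp n).symm⟩
  have hclosed : IsClosedEmbedding diag := ⟨hdiag, hrange ▸ isClosed_iInter fun n =>
    isClosed_eq (by fun_prop) (by fun_prop)⟩
  exact hclosed.polishSpace

lemma polishSpace_of_isGδ {X : Type*} [TopologicalSpace X] [PolishSpace X] {s : Set X}
    (hs : IsGδ s) : PolishSpace s := by
  obtain ⟨U, hU, rfl⟩ := isGδ_iff_eq_iInter_nat.1 hs
  have : ∀ n, PolishSpace (U n) := fun n => (hU n).polishSpace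
  exact polishSpace_iInter

lemma isGδ_of_polishSpace {X : Type*} [TopologicalSpace X] [T6Space X] {G : Set X}
    [PolishSpace G] : IsGδ G := by
  let _ := upgradeIsCompletelyMetrizable G
  let U : ℕ → Set X := fun n =>
    {x | ∃ V ∈ 𝓝 x, ∀ g g' : G, (g : X) ∈ V → (g' : X) ∈ V → dist g g' < 1 / (n + 1)}
  have hU : ∀ n, IsOpen (U n) := fun n => isOpen_iff_mem_nhds.2 fun x ⟨V, hV, hVdist⟩ => by
    filter_upwards [eventually_mem_nhds_iff.2 hV] with y hy using ⟨V, hy, hVdist⟩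
  suffices h : G = closure G ∩ ⋂ n, U n by
    rw [h]
    exact isClosed_closure.isGδ.inter (.iInter_of_isOpen hU)
  refine Subset.antisymm (subset_inter subset_closure fun x hx => mem_iInter.2 fun n => ?_)
    fun x ⟨hxG, hxU⟩ => ?_
  · have hball : Metric.ball (⟨x, hx⟩ : G) (1 / (n + 1) / 2) ∈ 𝓝 ⟨x, hx⟩ :=
      Metric.ball_mem_nhds _ (by positivity)
    obtain ⟨V, hV, hVball⟩ := mem_nhds_subtype G ⟨x, hx⟩ _ |>.1 hball
    refine ⟨V, hV, fun g g' hg hg' => ?_⟩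
    have := dist_triangle_right g g' ⟨x, hx⟩
    have hgball := Metric.mem_ball.1 (hVball hg)
    have hg'ball := Metric.mem_ball.1 (hVball hg')
    linarith
  · have hne : (comap ((↑) : G → X) (𝓝 x)).NeBot := mem_closure_iff_comap_neBot.1 hxG
    have hcauchy : Cauchy (comap ((↑) : G → X) (𝓝 x)) := by
      refine Metric.cauchy_iff.2 ⟨hne, fun ε hε => ?_⟩
      obtain ⟨n, hn⟩ := exists_nat_one_div_lt hε
      obtain ⟨V, hV, hVdist⟩ := mem_iInter.1 hxU n
      exact ⟨_, preimage_mem_comap hV, fun g hg g' hg' => (hVdist g g' hg hg').trans hn⟩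
    obtain ⟨g, hg⟩ := cauchy_iff_exists_le_nhds.1 hcauchy
    have hxg : x = g := tendsto_nhds_unique tendsto_comap
      ((continuous_subtype_val.tendsto g).mono_left hg)
    exact hxg ▸ g.2

lemma dense_preimage_of_isDenseInducing {X Y : Type*} [TopologicalSpace X]
    [TopologicalSpace Y] {i : X → Y} (hi : IsDenseInducing i) {U : Set Y} (hU : IsOpen U)
    (hUd : Dense U) : Dense (i ⁻¹' U) := by
  refine dense_iff_inter_open.2 fun V hV ⟨x, hx⟩ => ?_
  obtain ⟨W, hW, rfl⟩ := hi.isInducing.isOpen_iff.1 hV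
  obtain ⟨_, ⟨hyW, hyU⟩, y, rfl⟩ := hi.dense.inter_open_nonempty _ (hW.inter hU)
    (hUd.inter_open_nonempty W hW ⟨i x, hx⟩)
  exact ⟨y, hyW, hyU⟩

lemma preimage_mem_residual_of_isDenseInducing {X Y : Type*} [TopologicalSpace X]
    [TopologicalSpace Y] {i : X → Y} (hi : IsDenseInducing i) {s : Set Y}
    (hs : s ∈ residual Y) : i ⁻¹' s ∈ residual X := by
  obtain ⟨S, hSo, hSd, hSc, hSs⟩ := mem_residual_iff.1 hs
  have hpre : ∀ t ∈ S, i ⁻¹' t ∈ residual X := fun t ht => residual_of_dense_open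
    ((hSo t ht).preimage hi.continuous) (dense_preimage_of_isDenseInducing hi (hSo t ht) (hSd t ht))
  filter_upwards [(countable_bInter_mem hSc).2 hpre] with x hx
  exact hSs (by simpa using hx)

lemma range_mem_residual_of_isDenseInducing {X Y : Type*} [TopologicalSpace X] [BaireSpace X]
    [TopologicalSpace Y] [T2Space Y] [HereditarilyLindelofSpace Y] {i : X → Y}
    (hi : IsDenseInducing i) (hrange : AnalyticSet (range i)ᶜ) : range i ∈ residual Y := by
  obtain ⟨U, hU, hUi⟩ :=
    (baireMeasurableSet_of_analyticSet hrange).of_compl.residualEq_isOpen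
  have hpre : i ⁻¹' U ∈ residual X := by
    filter_upwards [preimage_mem_residual_of_isDenseInducing hi hUi.mem_iff] with x hx
    exact hx.1 ⟨x, rfl⟩
  have hUd : Dense U := by
    refine (hi.dense.dense_image hi.continuous (dense_of_mem_residual hpre)).mono ?_
    exact image_preimage_subset i U
  filter_upwards [hUi.mem_iff, residual_of_dense_open hU hUd] with y hy hyU
  exact hy.2 hyU

theorem exists_dense_polishSpace_of_analyticSet_compl {K : Type*} [TopologicalSpace K]
    [PolishSpace K] {X : Set K} [BaireSpace X] (hX : AnalyticSet Xᶜ) :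
    ∃ G : Set X, Dense G ∧ PolishSpace G := by
  have : PolishSpace (closure X) := isClosed_closure.polishSpace
  let i : X → closure X := inclusion subset_closure
  have hi : IsDenseInducing i := ⟨(IsEmbedding.inclusion subset_closure).isInducing,
    (denseRange_inclusion_iff subset_closure).2 Subset.rfl⟩
  have hrange : AnalyticSet (range i)ᶜ := by
    rw [range_inclusion]
    exact hX.preimage continuous_subtype_val
  obtain ⟨H, hHi, hH, hHd⟩ :=
    mem_residual.1 (range_mem_residual_of_isDenseInducing hi hrange)
  refine ⟨i ⁻¹' H, dense_of_mem_residual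
    (preimage_mem_residual_of_isDenseInducing hi (residual_of_dense_Gδ hH hHd)), ?_⟩
  rw [← polishSpace_image_iff (IsEmbedding.inclusion subset_closure),
    image_preimage_eq_of_subset hHi]
  exact polishSpace_of_isGδ hH

/-! ### Baire category in countable dense homogeneous spaces -/

section Meagre

variable {Y : Type*} [TopologicalSpace Y]

lemma exists_antitone_dense_isOpen_of_isMeagre_univ (h : IsMeagre (univ : Set Y)) :
    ∃ O : ℕ → Set Y, Antitone O ∧ (∀ n, IsOpen (O n)) ∧ (∀ n, Dense (O n)) ∧ ⋂ n, O n = ∅ := by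
  rw [IsMeagre, compl_univ, mem_residual_iff] at h
  obtain ⟨S, hSo, hSd, hSc, hS⟩ := h
  obtain ⟨V, hV⟩ := (hSc.insert univ).exists_eq_range (insert_nonempty _ _)
  have hVS : ∀ n, V n ∈ insert univ S := fun n => hV ▸ mem_range_self n
  have hVo : ∀ n, IsOpen (V n) := fun n => (hVS n).elim (· ▸ isOpen_univ) (hSo _)
  have hVd : ∀ n, Dense (V n) := fun n => (hVS n).elim (· ▸ dense_univ) (hSd _)
  have hdo : ∀ n, IsOpen (dissipate V n) := fun n =>
    (finite_Iic n).isOpen_biInter fun i _ => hVo i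
  refine ⟨dissipate V, antitone_dissipate, hdo, fun n => ?_, ?_⟩
  · induction n with
    | zero => simpa using hVd 0
    | succ n ih =>
      rw [dissipate_succ]
      exact ih.inter_of_isOpen_left (hVd _) (hdo n)
  · rw [iInter_dissipate, ← sInter_range, ← hV, sInter_insert, univ_inter]
    exact subset_empty_iff.1 hS

lemma isGδ_range_of_forall_mem [T1Space Y] [FirstCountableTopology Y] {O : ℕ → Set Y}
    (hO : Antitone O) (hOo : ∀ n, IsOpen (O n)) (hempty : ⋂ n, O n = ∅) {d : ℕ → Y}
    (hd : ∀ n, d n ∈ O n) : IsGδ (range d) := by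
  have hrange : range d = ⋂ n, (O n ∪ d '' Iio n) := by
    refine Subset.antisymm ?_ fun x hx => ?_
    · rintro _ ⟨k, rfl⟩
      refine mem_iInter.2 fun n => ?_
      rcases lt_or_ge k n with hkn | hnk
      · exact Or.inr (mem_image_of_mem d hkn)
      · exact Or.inl (hO hnk (hd k))
    · obtain ⟨n, hn⟩ : ∃ n, x ∉ O n := by
        simpa using (hempty ▸ notMem_empty x : x ∉ ⋂ n, O n)
      exact image_subset_range _ _ ((mem_iInter.1 hx n).resolve_left hn)
  rw [hrange]
  exact .iInter fun n => (hOo n).isGδ.union ((finite_Iio n).image d).isGδ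

lemma exists_countable_dense_isGδ_of_isMeagre_univ [T1Space Y] [SecondCountableTopology Y]
    (h : IsMeagre (univ : Set Y)) : ∃ D : Set Y, D.Countable ∧ Dense D ∧ IsGδ D := by
  obtain ⟨O, hO, hOo, hOd, hempty⟩ := exists_antitone_dense_isOpen_of_isMeagre_univ h
  cases isEmpty_or_nonempty Y with
  | inl _ => exact ⟨∅, countable_empty, fun y => isEmptyElim y, .empty⟩
  | inr _ =>
    obtain ⟨W, hW, -⟩ := (isBasis_countableBasis Y).exists_subset_of_mem_open
      (mem_univ (Classical.arbitrary Y)) isOpen_univ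
    obtain ⟨b, hb⟩ := (countable_countableBasis Y).exists_eq_range ⟨W, hW⟩
    have hbmem : ∀ n, b n ∈ countableBasis Y := fun n => hb ▸ mem_range_self n
    choose d hdb hdO using fun n => (hOd n).inter_open_nonempty (b n)
      (isOpen_of_mem_countableBasis (hbmem n)) (nonempty_of_mem_countableBasis (hbmem n))
    refine ⟨range d, countable_range d, ?_, isGδ_range_of_forall_mem hO hOo hempty hdO⟩
    refine (isBasis_countableBasis Y).dense_iff.2 fun U hU _ => ?_
    obtain ⟨n, rfl⟩ := hb ▸ hU
    exact ⟨d n, hdb n, n, rfl⟩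

lemma IsCDH.isGδ_of_countable_of_isMeagre_univ [T1Space Y] [SecondCountableTopology Y]
    (hY : IsCDH Y) (h : IsMeagre (univ : Set Y)) {C : Set Y} (hC : C.Countable) : IsGδ C := by
  obtain ⟨D, hDc, hDd, hD⟩ := exists_countable_dense_isGδ_of_isMeagre_univ h
  obtain ⟨φ, hφ⟩ := hY D (D ∪ C) hDc hDd (hDc.union hC) (hDd.mono subset_union_left)
  have hDC : IsGδ (D ∪ C) := by
    rw [← hφ, φ.image_eq_preimage_symm]
    exact hD.preimage φ.symm.continuous
  have hCeq : C = (D ∪ C) ∩ (D \ C)ᶜ := by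
    ext x
    simp only [mem_inter_iff, mem_union, mem_compl_iff, Set.mem_sdiff]
    tauto
  rw [hCeq]
  exact hDC.inter (hDc.mono sdiff_subset).isGδ_compl

lemma not_isGδ_of_countable_of_dense [T1Space Y] [BaireSpace Y] [Nonempty Y]
    [∀ y : Y, (𝓝[≠] y).NeBot] {D : Set Y} (hDc : D.Countable) (hDd : Dense D) : ¬ IsGδ D := by
  refine fun hD => not_isMeagre_of_isGδ_of_dense hD hDd ?_
  rw [← biUnion_of_singleton D]
  exact isMeagre_biUnion hDc fun y _ =>
    residual_of_dense_open isOpen_compl_singleton (dense_compl_singleton y)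

lemma baireSpace_of_forall_isOpen_not_isMeagre
    (h : ∀ U : Set Y, IsOpen U → U.Nonempty → ¬ IsMeagre U) : BaireSpace Y := by
  refine ⟨fun O hO hOd => dense_iff_inter_open.2 fun U hU hne => ?_⟩
  by_contra hempty
  refine h U hU hne (mem_of_superset
    (countable_iInter_mem.2 fun n => residual_of_dense_open (hO n) (hOd n)) fun x hx hxU => ?_)
  exact hempty ⟨x, hxU, hx⟩

end Meagre

lemma dense_setOf_exists_apply_eq {ι : Type*} [Infinite ι] {X : ι → Type*}
    [∀ i, TopologicalSpace (X i)] (u : ∀ i, X i) : Dense {x : ∀ i, X i | ∃ i, x i = u i} := by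
  classical
  refine dense_iff_inter_open.2 fun V hV ⟨x, hx⟩ => ?_
  obtain ⟨I, w, hw, hwV⟩ := isOpen_pi_iff.1 hV x hx
  obtain ⟨j, hj⟩ := Infinite.exists_notMem_finset I
  refine ⟨Function.update x j (u j), hwV fun i hi => ?_, j, Function.update_self ..⟩
  rw [Function.update_of_ne (ne_of_mem_of_not_mem hi hj)]
  exact (hw i hi).2

lemma pi_neBot_nhdsNE {ι : Type*} [Infinite ι] {X : ι → Type*} [∀ i, TopologicalSpace (X i)]
    [∀ i, Nontrivial (X i)] (x : ∀ i, X i) : (𝓝[≠] x).NeBot := by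
  choose u hu using fun i => exists_ne (x i)
  rw [← mem_closure_iff_nhdsWithin_neBot]
  refine (dense_setOf_exists_apply_eq u).mono (fun y hy => ?_) x
  obtain ⟨i, hi⟩ := hy
  exact fun hyx => hu i (hi ▸ congrFun hyx i)

lemma isMeagre_univ_pi_of_isOpen {ι X : Type*} [Infinite ι] [Countable ι] [TopologicalSpace X]
    {U : Set X} (hUo : IsOpen U) (hne : U.Nonempty) (hU : IsMeagre U) :
    IsMeagre (univ : Set (ι → X)) := by
  obtain ⟨u, hu⟩ := hne
  let V : Set (ι → X) := ⋃ i, (fun x => x i) ⁻¹' U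
  have hVo : IsOpen V := isOpen_iUnion fun i => hUo.preimage (continuous_apply i)
  have hVd : Dense V := (dense_setOf_exists_apply_eq fun _ => u).mono fun x hx => by
    obtain ⟨i, hi⟩ := hx
    exact mem_iUnion_of_mem i (hi ▸ hu : x i ∈ U)
  have hVm : IsMeagre V := isMeagre_iUnion fun i =>
    hU.preimage_of_isOpenMap (continuous_apply i) (isOpenMap_eval i)
  filter_upwards [residual_of_dense_open hVo hVd, hVm] with x hx hx'
  exact absurd hx hx'

section PowersOfCDH

variable {X : Type*} [TopologicalSpace X] [T1Space X] [SecondCountableTopology X]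

lemma IsCDH.not_isMeagre_univ_pi_nat [Nontrivial X] (h : IsCDH (ℕ → X)) :
    ¬ IsMeagre (univ : Set (ℕ → X)) := by
  intro hm
  obtain ⟨a, b, hab⟩ := exists_pair_ne X
  let φ : (ℕ → Bool) → ℕ → X := Pi.map fun _ t => if t then a else b
  have hφ : Continuous φ := .piMap fun _ => continuous_of_discreteTopology
  have hφinj : φ.Injective := .piMap fun _ s t => by cases s <;> cases t <;> simp [hab, hab.symm]
  obtain ⟨E, hEc, hEd⟩ := exists_countable_dense (ℕ → Bool)
  have : ∀ x : ℕ → Bool, (𝓝[≠] x).NeBot := pi_neBot_nhdsNE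
  refine not_isGδ_of_countable_of_dense hEc hEd ?_
  rw [← preimage_image_eq E hφinj]
  exact (h.isGδ_of_countable_of_isMeagre_univ hm (hEc.image φ)).preimage hφ

lemma IsCDH.baireSpace_of_pi_nat (h : IsCDH (ℕ → X)) : BaireSpace X := by
  cases subsingleton_or_nontrivial X with
  | inl _ => exact baire_of_finite
  | inr _ => exact baireSpace_of_forall_isOpen_not_isMeagre fun U hU hne hm =>
      h.not_isMeagre_univ_pi_nat (isMeagre_univ_pi_of_isOpen hU hne hm)

end PowersOfCDH

/-! ### Spaces whose countable subsets lie in Polish subspaces -/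

/-- A space is countably controlled if each of its countable subsets is contained in a Polish
subspace. This is the trace of countable dense homogeneity which survives passing to closed
subspaces, such as `X` inside `ℕ → X`. -/
def IsCountablyControlled (X : Type*) [TopologicalSpace X] : Prop :=
  ∀ D : Set X, D.Countable → ∃ G : Set X, D ⊆ G ∧ PolishSpace G

section CountablyControlled

variable {X Y : Type*} [TopologicalSpace X] [TopologicalSpace Y]

lemma IsCDH.isCountablyControlled (hX : IsCDH X) {P : Set X} (hPd : Dense P)
    (hP : PolishSpace P) : IsCountablyControlled X := by
  intro D hD
  obtain ⟨A, hAP, hAc, hAd⟩ := hPd.exists_countable_dense_subset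
  obtain ⟨φ, hφ⟩ := hX A (A ∪ D) hAc hAd (hAc.union hD) (hAd.mono subset_union_left)
  refine ⟨φ '' P, ?_, (polishSpace_image_iff φ.isEmbedding).2 hP⟩
  exact subset_union_right.trans (hφ ▸ image_mono hAP)

lemma IsCountablyControlled.of_isClosedEmbedding (hY : IsCountablyControlled Y) {f : X → Y}
    (hf : IsClosedEmbedding f) : IsCountablyControlled X := by
  intro D hD
  obtain ⟨G, hDG, hG⟩ := hY (f '' D) (hD.image f)
  exact ⟨f ⁻¹' G, image_subset_iff.1 hDG, (hf.restrictPreimage G).polishSpace⟩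

lemma IsCountablyControlled.of_pi [T2Space X] {ι : Type*} [Nonempty ι]
    (h : IsCountablyControlled (ι → X)) : IsCountablyControlled X :=
  h.of_isClosedEmbedding <| Function.LeftInverse.isClosedEmbedding
    (f := fun x => x (Classical.arbitrary ι)) (g := fun x _ => x) (fun _ => rfl)
    (by fun_prop) (by fun_prop)

lemma exists_dense_polishSpace_pi {ι : Type*} [Countable ι] {P : Set X} (hPd : Dense P)
    [PolishSpace P] : ∃ Q : Set (ι → X), Dense Q ∧ PolishSpace Q :=
  ⟨range (Pi.map fun _ => ((↑) : P → X)), DenseRange.piMap fun _ => hPd.denseRange_val,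
    polishSpace_range_of_isEmbedding (.piMap fun _ => .subtypeVal)⟩

theorem isCountablyControlled_of_isCDH_pi_nat [T2Space X]
    (h : IsCDH (ℕ → X)) {P : Set X} (hPd : Dense P) (hP : PolishSpace P) :
    IsCountablyControlled X := by
  obtain ⟨Q, hQd, hQ⟩ := exists_dense_polishSpace_pi (ι := ℕ) hPd
  exact (h.isCountablyControlled hQd hQ).of_pi

end CountablyControlled

/-- Two sets `X` and `S` are separated in this sense if some Gδ set contains `X` and misses `S`;
the relation is not symmetric. -/
def IsGδSeparated {K : Type*} [TopologicalSpace K] (X S : Set K) : Prop :=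
  ∃ G, IsGδ G ∧ X ⊆ G ∧ Disjoint G S

namespace IsGδSeparated

variable {K : Type*} [TopologicalSpace K] {X S T : Set K}

lemma mono_right (h : IsGδSeparated X T) (hST : S ⊆ T) : IsGδSeparated X S := by
  obtain ⟨G, hG, hXG, hGT⟩ := h
  exact ⟨G, hG, hXG, hGT.mono_right hST⟩

lemma union_right (hS : IsGδSeparated X S) (hT : IsGδSeparated X T) :
    IsGδSeparated X (S ∪ T) := by
  obtain ⟨G, hG, hXG, hGS⟩ := hS
  obtain ⟨H, hH, hXH, hHT⟩ := hT
  exact ⟨G ∩ H, hG.inter hH, subset_inter hXG hXH,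
    (hGS.mono_left inter_subset_left).union_right (hHT.mono_left inter_subset_right)⟩

lemma iUnion_right {ι : Type*} [Countable ι] {S : ι → Set K} (h : ∀ i, IsGδSeparated X (S i)) :
    IsGδSeparated X (⋃ i, S i) := by
  choose G hG hXG hGS using h
  exact ⟨⋂ i, G i, .iInter hG, subset_iInter hXG,
    disjoint_iUnion_right.2 fun i => (hGS i).mono_left (iInter_subset G i)⟩

lemma of_disjoint_closure (h : Disjoint (closure S) X) : IsGδSeparated X S :=
  ⟨(closure S)ᶜ, isClosed_closure.isOpen_compl.isGδ, h.subset_compl_left,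
    disjoint_compl_left.mono_right subset_closure⟩

lemma isGδ (h : IsGδSeparated X Xᶜ) : IsGδ X := by
  obtain ⟨G, hG, hXG, hGX⟩ := h
  rwa [hXG.antisymm (disjoint_compl_right_iff_subset.1 hGX)]

end IsGδSeparated

/-- The set of points near which the image of `f` cannot be separated from `X` by a Gδ set
containing `X`. -/
def inseparableLocus {P K : Type*} [TopologicalSpace P] [TopologicalSpace K] (f : P → K)
    (X : Set K) : Set P :=
  {x | ∀ U ∈ 𝓝 x, ¬ IsGδSeparated X (f '' U)}

section InseparableLocus

variable {P K : Type*} [TopologicalSpace P] [TopologicalSpace K] {f : P → K} {X : Set K}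

lemma notMem_inseparableLocus_iff {x : P} :
    x ∉ inseparableLocus f X ↔ ∃ U ∈ 𝓝 x, IsGδSeparated X (f '' U) := by
  simp [inseparableLocus]

lemma isClosed_inseparableLocus : IsClosed (inseparableLocus f X) := by
  refine isOpen_compl_iff.1 (isOpen_iff_mem_nhds.2 fun x hx => ?_)
  obtain ⟨U, hU, hUX⟩ := notMem_inseparableLocus_iff.1 hx
  filter_upwards [eventually_mem_nhds_iff.2 hU] with y hy
  exact notMem_inseparableLocus_iff.2 ⟨U, hy, hUX⟩

variable [HereditarilyLindelofSpace P]

lemma isGδSeparated_image_compl_inseparableLocus :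
    IsGδSeparated X (f '' (inseparableLocus f X)ᶜ) := by
  refine (HereditarilyLindelofSpace.isLindelof (inseparableLocus f X)ᶜ).induction_on
    (p := fun S => IsGδSeparated X (f '' S)) (fun S T hST hT => hT.mono_right (image_mono hST))
    (fun 𝒮 h𝒮 h => ?_) fun x hx => ?_
  · have := h𝒮.to_subtype
    rw [sUnion_eq_iUnion, image_iUnion]
    exact .iUnion_right fun S => h S S.2
  · obtain ⟨U, hU, hUX⟩ := notMem_inseparableLocus_iff.1 hx
    exact ⟨U, mem_nhdsWithin_of_mem_nhds hU, hUX⟩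

lemma closure_image_inter_inseparableLocus_inter_nonempty {x : P} (hx : x ∈ inseparableLocus f X)
    {U : Set P} (hU : U ∈ 𝓝 x) : (closure (f '' (inseparableLocus f X ∩ U)) ∩ X).Nonempty := by
  by_contra hempty
  refine hx U hU ?_
  have hU' := (IsGδSeparated.of_disjoint_closure
    (disjoint_iff_inter_eq_empty.2 (not_nonempty_iff_eq_empty.1 hempty))).union_right
    (isGδSeparated_image_compl_inseparableLocus (f := f))
  refine hU'.mono_right ?_
  rw [← image_union]
  exact image_mono fun y hy => by by_cases h : y ∈ inseparableLocus f X <;> simp [h, hy]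

end InseparableLocus

lemma exists_apply_mem_of_closure_image_inter_nonempty {C K : Type*} [TopologicalSpace C]
    [BaireSpace C] [SecondCountableTopology C] [Nonempty C] [TopologicalSpace K] [T6Space K]
    {g : C → K} (hg : Continuous g) {X : Set K} (hX : IsCountablyControlled X)
    (h : ∀ V : Set C, IsOpen V → V.Nonempty → (closure (g '' V) ∩ X).Nonempty) :
    ∃ c, g c ∈ X := by
  have : Nonempty K := ‹Nonempty C›.map g
  choose! p hp hpX using h
  let D : Set X := (↑) ⁻¹' (p '' countableBasis C)
  obtain ⟨G, hDG, hG⟩ := hX D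
    (((countable_countableBasis C).image p).preimage Subtype.val_injective)
  have : PolishSpace ((↑) '' G : Set K) := (polishSpace_image_iff .subtypeVal).2 hG
  obtain ⟨O, hO, hGO⟩ := isGδ_iff_eq_iInter_nat.1 (isGδ_of_polishSpace (G := ((↑) '' G : Set K)))
  have hpO : ∀ n, ∀ V ∈ countableBasis C, p V ∈ O n := fun n V hV => by
    have hVX := hpX V (isOpen_of_mem_countableBasis hV) (nonempty_of_mem_countableBasis hV)
    have hVG : p V ∈ ((↑) '' G : Set K) := ⟨⟨p V, hVX⟩, hDG ⟨V, hV, rfl⟩, rfl⟩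
    exact mem_iInter.1 (hGO ▸ hVG) n
  have hdense : ∀ n, Dense (g ⁻¹' O n) := fun n => by
    refine (isBasis_countableBasis C).dense_iff.2 fun V hV hne => ?_
    obtain ⟨_, hcO, c, hc, rfl⟩ := mem_closure_iff.1 (hp V (isOpen_of_mem_countableBasis hV) hne)
      (O n) (hO n) (hpO n V hV)
    exact ⟨c, hc, hcO⟩
  obtain ⟨c, hc⟩ := (dense_iInter_of_isOpen_nat (fun n => (hO n).preimage hg) hdense).nonempty
  rw [← preimage_iInter, mem_preimage, ← hGO] at hc
  obtain ⟨x, -, hx⟩ := hc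
  exact ⟨c, hx ▸ x.2⟩

theorem isGδSeparated_range_of_isCountablyControlled {P K : Type*} [TopologicalSpace P]
    [PolishSpace P] [TopologicalSpace K] [T6Space K] {f : P → K} (hf : Continuous f) {X : Set K}
    (hfX : Disjoint (range f) X) (hX : IsCountablyControlled X) :
    IsGδSeparated X (range f) := by
  let C := inseparableLocus f X
  rcases C.eq_empty_or_nonempty with hC | hC
  · simpa [C, hC] using isGδSeparated_image_compl_inseparableLocus (f := f) (X := X)
  have : Nonempty C := hC.to_subtype
  have : PolishSpace C := isClosed_inseparableLocus.polishSpace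
  obtain ⟨c, hc⟩ := exists_apply_mem_of_closure_image_inter_nonempty
    (hf.comp continuous_subtype_val : Continuous (f ∘ ((↑) : C → P))) hX fun V hV hne => by
      obtain ⟨U, hU, rfl⟩ := isOpen_induced_iff.1 hV
      obtain ⟨x, hx⟩ := hne
      rw [image_comp, Subtype.image_preimage_coe]
      exact closure_image_inter_inseparableLocus_inter_nonempty x.2 (hU.mem_nhds hx)
  exact absurd hc (disjoint_left.1 hfX (mem_range_self _))

theorem isGδ_of_isCountablyControlled {K : Type*} [TopologicalSpace K] [T6Space K] {X : Set K}
    (hXc : AnalyticSet Xᶜ) (hX : IsCountablyControlled X) : IsGδ X := by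
  rw [AnalyticSet] at hXc
  obtain hempty | ⟨f, hf, hfX⟩ := hXc
  · rw [compl_empty_iff.1 hempty]
    exact .univ
  · refine IsGδSeparated.isGδ (hfX ▸ ?_)
    exact isGδSeparated_range_of_isCountablyControlled hf (hfX ▸ disjoint_compl_left) hX

/-! ### Coanalytic spaces -/

theorem polishSpace_of_isCDH_pi_nat {K : Type*} [TopologicalSpace K] [PolishSpace K] {X : Set K}
    (hX : AnalyticSet Xᶜ) (h : IsCDH (ℕ → X)) : PolishSpace X := by
  have : BaireSpace X := h.baireSpace_of_pi_nat
  obtain ⟨P, hPd, hP⟩ := exists_dense_polishSpace_of_analyticSet_compl hX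
  have hXc : IsCountablyControlled X := isCountablyControlled_of_isCDH_pi_nat h hPd hP
  exact polishSpace_of_isGδ (isGδ_of_isCountablyControlled hX hXc)

theorem statement6_general {K : Type*} [TopologicalSpace K] [PolishSpace K] {X : Set K}
    (hX : AnalyticSet Xᶜ) (hz : IsZeroDimensional X) : PolishSpace X ↔ IsCDH (ℕ → X) :=
  ⟨fun _ => hz.isCDH_pi_nat, polishSpace_of_isCDH_pi_nat hX⟩

/-- Let `X` be a coanalytic subspace of the Cantor set `2^ω` (i.e. its
complement is analytic). Then `X` is Polish if and only if `X^ω` is countable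
dense homogeneous. -/
theorem statement6 (X : Set (ℕ → Bool)) (hX : MeasureTheory.AnalyticSet Xᶜ) :
    PolishSpace X ↔ IsCDH (ℕ → X) := by
  have : PolishSpace (ℕ → Bool) := { }
  have hcantor : IsZeroDimensional (ℕ → Bool) := isTopologicalBasis_isClopen
  exact statement6_general hX (hcantor.of_isInducing .subtypeVal)
end

section
/- Let h : E → F be a homeomorphism between closed nowhere dense subsets E and F of the Cantor set 2^ω. Then there exists a Knaster-Reichbach cover for ⟨2^ω \ E, 2^ω \ F, h⟩. -/
/-- `𝒱` is a partition of `A` into non-empty clopen subsets of `ℕ → Bool`. -/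
def IsClopenPartition (A : Set (ℕ → Bool)) (𝒱 : Set (Set (ℕ → Bool))) : Prop :=
  (∀ U ∈ 𝒱, IsClopen U ∧ U.Nonempty) ∧ 𝒱.PairwiseDisjoint id ∧ ⋃₀ 𝒱 = A

/-- `⟨𝒱, 𝒲, ψ⟩` is a Knaster-Reichbach cover for `⟨2^ω \ E, 2^ω \ F, h⟩`:
`𝒱` is a partition of `2^ω \ E` into non-empty clopen sets, `𝒲` is a partition
of `2^ω \ F` into non-empty clopen sets, `ψ` restricts to a bijection from `𝒱`
to `𝒲`, and every bijection `f` of `2^ω` which extends `h` and maps each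
`U ∈ 𝒱` onto `ψ U` is continuous at every point of `E` and has inverse
continuous at every point of `F`. -/
def IsKRCover (E F : Set (ℕ → Bool)) (h : E ≃ₜ F)
    (𝒱 𝒲 : Set (Set (ℕ → Bool))) (ψ : Set (ℕ → Bool) → Set (ℕ → Bool)) : Prop :=
  IsClopenPartition Eᶜ 𝒱 ∧ IsClopenPartition Fᶜ 𝒲 ∧ Set.BijOn ψ 𝒱 𝒲 ∧
    ∀ f : (ℕ → Bool) ≃ (ℕ → Bool),
      (∀ x : E, f (x : ℕ → Bool) = ((h x : F) : ℕ → Bool)) →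
      (∀ U ∈ 𝒱, f '' U = ψ U) →
      (∀ x ∈ E, ContinuousAt f x) ∧ (∀ y ∈ F, ContinuousAt f.symm y)

/-!
Let `E` be non-empty. Partition the complement of `E` into clopen sets that are small compared with
their distance to `E`. There are infinitely many of them, and by compactness all but finitely many
are close to `E`; thus they form a sequence `V n` whose members shrink onto points `a n` of `E`.
Every point of `E` is a cluster point of `a`, because the complement of `E` is dense. Partition
the complement of `F` likewise into sets `W n` shrinking onto points `b n` of `F`.

Every point of `F` is then a cluster point of both `h ∘ a` and `b`, so a back-and-forth argument
yields a permutation `σ` for which the distance from `h (a n)` to `b (σ n)` tends to `0`. Matching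
`V n` with `W (σ n)` gives the cover: as `z ∉ E` approaches `p ∈ E`, the index `n` of the piece
containing `z` tends to infinity, so that `a n` tends to `p`, and `f z ∈ W (σ n)` has the same
limit as `h (a n)`, namely `h p`.
-/

open Set Filter Topology Metric TopologicalSpace

/-- A partition `𝒱` of `A` into non-empty clopen subsets of a topological space; for
`X = (ℕ → Bool)` this unfolds to `IsClopenPartition`. -/
def IsClopenPartitionOf {X : Type*} [TopologicalSpace X] (A : Set X) (𝒱 : Set (Set X)) : Prop :=
  (∀ U ∈ 𝒱, IsClopen U ∧ U.Nonempty) ∧ 𝒱.PairwiseDisjoint id ∧ ⋃₀ 𝒱 = A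

/-- A Knaster-Reichbach cover for `⟨X \ E, Y \ F, h⟩`, with the bijection of the two partitions
encoded as a map on all subsets of `X`; for `X = Y = (ℕ → Bool)` this unfolds to `IsKRCover`. -/
def IsKnasterReichbachCover {X Y : Type*} [TopologicalSpace X] [TopologicalSpace Y]
    (E : Set X) (F : Set Y) (h : E ≃ₜ F)
    (𝒱 : Set (Set X)) (𝒲 : Set (Set Y)) (ψ : Set X → Set Y) : Prop :=
  IsClopenPartitionOf Eᶜ 𝒱 ∧ IsClopenPartitionOf Fᶜ 𝒲 ∧ BijOn ψ 𝒱 𝒲 ∧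
    ∀ f : X ≃ Y, (∀ x : E, f x = h x) → (∀ U ∈ 𝒱, f '' U = ψ U) →
      (∀ x ∈ E, ContinuousAt f x) ∧ (∀ y ∈ F, ContinuousAt f.symm y)

theorem exists_injective_range_eq_of_countable_of_infinite {α : Type*} {s : Set α}
    (hs : s.Countable) (hinf : s.Infinite) : ∃ u : ℕ → α, Function.Injective u ∧ range u = s := by
  have := hs.to_subtype
  have := hinf.to_subtype
  obtain ⟨e⟩ := nonempty_equiv_of_countable (α := ℕ) (β := s)
  refine ⟨Subtype.val ∘ e, Subtype.val_injective.comp e.injective, ?_⟩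
  rw [e.surjective.range_comp, Subtype.range_coe]

namespace IsClopenPartitionOf

section TopologicalSpace

variable {X : Type*} [TopologicalSpace X] {A : Set X} {𝒱 : Set (Set X)}

theorem singleton_univ [Nonempty X] : IsClopenPartitionOf (univ : Set X) {univ} :=
  ⟨by simp [isClopen_univ], pairwiseDisjoint_singleton _ _, sUnion_singleton _⟩

theorem infinite_of_not_isClosed (h𝒱 : IsClopenPartitionOf A 𝒱) (hA : ¬IsClosed A) :
    𝒱.Infinite := by
  intro hfin
  rw [← h𝒱.2.2, sUnion_eq_biUnion] at hA
  exact hA (hfin.isClosed_biUnion fun U hU => (h𝒱.1 U hU).1.isClosed)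

theorem finite_inter_nonempty {K : Set X} (h𝒱 : IsClopenPartitionOf A 𝒱) (hK : IsCompact K)
    (hKA : K ⊆ A) : {U ∈ 𝒱 | (U ∩ K).Nonempty}.Finite := by
  obtain ⟨T, hT𝒱, hTfin, hKT⟩ := hK.elim_finite_subcover_image (b := 𝒱) (c := id)
    (fun U hU => (h𝒱.1 U hU).1.isOpen) (by simpa only [id, ← sUnion_eq_biUnion, h𝒱.2.2] using hKA)
  refine hTfin.subset fun U ⟨hU, z, hzU, hzK⟩ => ?_
  obtain ⟨U', hU', hzU'⟩ := mem_iUnion₂.1 (hKT hzK)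
  rwa [h𝒱.2.1.elim_set hU (hT𝒱 hU') z hzU hzU']

theorem range_disjointed_sdiff_empty {C : ℕ → Set X} (hC : ∀ n, IsClopen (C n)) :
    IsClopenPartitionOf (⋃ n, C n) (range (disjointed C) \ {∅}) := by
  refine ⟨?_, ?_, ?_⟩
  · rintro _ ⟨⟨n, rfl⟩, hne⟩
    exact ⟨disjointedRec (fun _ _ ht => ht.diff (hC _)) (hC n), nonempty_iff_ne_empty.2 hne⟩
  · exact (disjoint_disjointed C).range_pairwise.mono sdiff_subset
  · rw [sUnion_sdiff_singleton_empty, sUnion_range, iUnion_disjointed]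

theorem exists_countable_refining [SecondCountableTopology X]
    (hX : IsTopologicalBasis {s : Set X | IsClopen s}) (hA : IsOpen A) {N : X → Set X}
    (hN : ∀ x ∈ A, N x ∈ 𝓝 x) :
    ∃ 𝒱, IsClopenPartitionOf A 𝒱 ∧ 𝒱.Countable ∧ ∀ U ∈ 𝒱, ∃ x ∈ A, U ⊆ N x := by
  let 𝒞 : Set (Set X) := {C | IsClopen C ∧ C ⊆ A ∧ ∃ x ∈ A, C ⊆ N x}
  have h𝒞 : ⋃₀ 𝒞 = A := by
    refine (sUnion_subset fun C hC => hC.2.1).antisymm fun x hx => ?_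
    obtain ⟨C, hC, hxC, hCA⟩ := hX.mem_nhds_iff.1 (inter_mem (hA.mem_nhds hx) (hN x hx))
    exact ⟨C, ⟨hC, hCA.trans inter_subset_left, x, hx, hCA.trans inter_subset_right⟩, hxC⟩
  obtain ⟨T, hT, hT𝒞, hTU⟩ := isOpen_sUnion_countable 𝒞 fun C hC => hC.1.isOpen
  -- `∅` is added because `T` may be empty and so need not be the range of a sequence.
  obtain ⟨C, hC⟩ := (hT.insert ∅).exists_eq_range (insert_nonempty ∅ T)
  have hCmem (n : ℕ) : C n = ∅ ∨ C n ∈ 𝒞 := by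
    have : C n ∈ insert ∅ T := hC ▸ mem_range_self n
    exact this.imp_right fun h => hT𝒞 h
  have hCunion : ⋃ n, C n = A := by
    rw [← sUnion_range, ← hC, sUnion_insert, empty_union, hTU, h𝒞]
  refine ⟨range (disjointed C) \ {∅}, ?_, (countable_range _).mono sdiff_subset, ?_⟩
  · rw [← hCunion]
    exact range_disjointed_sdiff_empty fun n =>
      (hCmem n).elim (fun h => h ▸ isClopen_empty) And.left
  · rintro _ ⟨⟨n, rfl⟩, hne⟩
    rcases hCmem n with hempty | ⟨-, -, x, hx, hCx⟩
    · exact absurd (subset_empty_iff.1 (hempty ▸ disjointed_subset C n)) hne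
    · exact ⟨x, hx, (disjointed_subset C n).trans hCx⟩

end TopologicalSpace

theorem eventually_infDist_lt {X : Type*} [PseudoMetricSpace X] [CompactSpace X] {E : Set X}
    {V : ℕ → Set X} (hV : IsClopenPartitionOf Eᶜ (range V)) (hinj : Function.Injective V)
    {ε : ℝ} (hε : 0 < ε) : ∀ᶠ n in atTop, ∀ z ∈ V n, infDist z E < ε := by
  let K : Set X := {z | ε ≤ infDist z E}
  have hK : IsCompact K := (isClosed_le continuous_const (continuous_infDist_pt E)).isCompact
  have hKE : K ⊆ Eᶜ := fun z hz hzE => hε.not_ge (hz.trans (infDist_zero_of_mem hzE).le)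
  have hfin : {n | (V n ∩ K).Nonempty}.Finite :=
    ((hV.finite_inter_nonempty hK hKE).preimage hinj.injOn).subset
      fun n hn => ⟨mem_range_self n, hn⟩
  rw [← Nat.cofinite_eq_atTop]
  filter_upwards [hfin.eventually_cofinite_notMem] with n hn z hz
  exact not_le.1 fun hzK => hn ⟨z, hz, hzK⟩

end IsClopenPartitionOf

/-- A sequence `V` of distinct sets forming a clopen partition of the complement of `E`, each `V n`
assigned a point `a n` of `E` onto which the sets shrink: `V n` lies in smaller and smaller balls
around `a n`. -/
structure IsShrinkingPartition {X : Type*} [PseudoMetricSpace X] (E : Set X) (V : ℕ → Set X)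
    (a : ℕ → E) : Prop where
  injective : Function.Injective V
  isClopenPartitionOf : IsClopenPartitionOf Eᶜ (range V)
  eventually_subset_ball : ∀ ε > 0, ∀ᶠ n in atTop, V n ⊆ ball (a n : X) ε

namespace IsShrinkingPartition

variable {X : Type*} [PseudoMetricSpace X] {E : Set X} {V : ℕ → Set X} {a : ℕ → E}

theorem exists_of_isClosed [CompactSpace X] (hX : IsTopologicalBasis {s : Set X | IsClopen s})
    (hE : IsClosed E) (hdense : Dense Eᶜ) (hne : E.Nonempty) :
    ∃ (V : ℕ → Set X) (a : ℕ → E), IsShrinkingPartition E V a := by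
  have infDist_pos {x : X} (hx : x ∈ Eᶜ) : 0 < infDist x E := (hE.notMem_iff_infDist_pos hne).1 hx
  obtain ⟨𝒱, h𝒱, hcount, hball⟩ := IsClopenPartitionOf.exists_countable_refining hX hE.isOpen_compl
    (N := fun x => ball x (infDist x E / 2))
    fun x hx => ball_mem_nhds x (half_pos (infDist_pos hx))
  have hinf : 𝒱.Infinite := h𝒱.infinite_of_not_isClosed fun hclosed =>
    hne.ne_empty (compl_univ_iff.1 (hclosed.closure_eq.symm.trans hdense.closure_eq))
  obtain ⟨V, hinj, rfl⟩ := exists_injective_range_eq_of_countable_of_infinite hcount hinf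
  choose x _ hVx using fun n => hball (V n) (mem_range_self n)
  choose a haE ha using fun n => hE.exists_infDist_eq_dist hne (x n)
  refine ⟨V, fun n => ⟨a n, haE n⟩, hinj, h𝒱, fun ε hε => ?_⟩
  filter_upwards [h𝒱.eventually_infDist_lt hinj (show 0 < ε / 3 by positivity)] with n hn z hz
  have hzx : dist z (x n) < infDist (x n) E / 2 := hVx n hz
  have hxE : infDist (x n) E ≤ infDist z E + dist (x n) z := infDist_le_infDist_add_dist
  rw [dist_comm] at hxE
  calc dist z (a n) ≤ dist z (x n) + dist (x n) (a n) := dist_triangle _ _ _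
    _ < ε := by linarith [hn z hz, ha n]

theorem exists_index (hV : IsShrinkingPartition E V a) : ∃ N : X → ℕ, ∀ z ∈ Eᶜ, z ∈ V (N z) := by
  have hcover (z : X) : ∃ n, z ∈ Eᶜ → z ∈ V n := by
    by_cases hz : z ∈ Eᶜ
    · rw [← hV.isClopenPartitionOf.2.2, sUnion_range] at hz
      exact (mem_iUnion.1 hz).imp fun _ hn _ => hn
    · exact ⟨0, fun h => absurd h hz⟩
  choose N hN using hcover
  exact ⟨N, hN⟩

theorem comp_perm {b : ℕ → E} (hV : IsShrinkingPartition E V a) (σ : Equiv.Perm ℕ)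
    (hσ : Tendsto (fun n => dist (b n) (a (σ n))) atTop (𝓝 0)) :
    IsShrinkingPartition E (V ∘ σ) b := by
  refine ⟨hV.injective.comp σ.injective, ?_, fun ε hε => ?_⟩
  · rw [σ.surjective.range_comp]
    exact hV.isClopenPartitionOf
  · filter_upwards [σ.injective.nat_tendsto_atTop.eventually
      (hV.eventually_subset_ball (ε / 2) (half_pos hε)), hσ.eventually_lt_const (half_pos hε)]
      with n hball hdist
    refine hball.trans (ball_subset_ball' ?_)
    rw [dist_comm, ← Subtype.dist_eq]
    linarith

theorem tendsto_dist {ι : Type*} {l : Filter ι} {N : ι → ℕ} {z : ι → X}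
    (hV : IsShrinkingPartition E V a) (hN : Tendsto N l atTop) (hz : ∀ᶠ i in l, z i ∈ V (N i)) :
    Tendsto (fun i => dist (z i) (a (N i))) l (𝓝 0) := by
  refine Metric.tendsto_nhds.2 fun ε hε => ?_
  filter_upwards [hN.eventually (hV.eventually_subset_ball ε hε), hz] with i hball hi
  simpa using hball hi

theorem tendsto_index {N : X → ℕ} (hV : IsShrinkingPartition E V a)
    (hN : ∀ z ∈ Eᶜ, z ∈ V (N z)) (p : E) : Tendsto N (𝓝[Eᶜ] (p : X)) atTop := by
  refine tendsto_atTop.2 fun m => ?_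
  have hclosed : IsClosed (⋃ n ∈ Iio m, V n) := (finite_Iio m).isClosed_biUnion fun n _ =>
    (hV.isClopenPartitionOf.1 _ (mem_range_self n)).1.isClosed
  have hp : (p : X) ∉ ⋃ n ∈ Iio m, V n := by
    intro hp
    obtain ⟨n, -, hn⟩ := mem_iUnion₂.1 hp
    have : (p : X) ∈ Eᶜ := hV.isClopenPartitionOf.2.2 ▸ mem_sUnion_of_mem hn (mem_range_self n)
    exact this p.2
  filter_upwards [self_mem_nhdsWithin, mem_nhdsWithin_of_mem_nhds (hclosed.compl_mem_nhds hp)]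
    with z hzE hz
  by_contra! hlt
  exact hz (mem_biUnion hlt (hN z hzE))

theorem tendsto_index_point {N : X → ℕ} (hV : IsShrinkingPartition E V a)
    (hN : ∀ z ∈ Eᶜ, z ∈ V (N z)) (p : E) : Tendsto (a ∘ N) (𝓝[Eᶜ] (p : X)) (𝓝 p) :=
  tendsto_subtype_rng.2 <| tendsto_nhdsWithin_of_tendsto_nhds tendsto_id |>.congr_dist <|
    hV.tendsto_dist (hV.tendsto_index hN p) (eventually_mem_nhdsWithin.mono hN)

theorem mapClusterPt (hV : IsShrinkingPartition E V a) (hdense : Dense Eᶜ) (p : E) :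
    MapClusterPt p atTop a := by
  obtain ⟨N, hN⟩ := hV.exists_index
  have : (𝓝[Eᶜ] (p : X)).NeBot := mem_closure_iff_nhdsWithin_neBot.1 (hdense p)
  exact (hV.tendsto_index_point hN p).mapClusterPt.of_comp (hV.tendsto_index hN p)

theorem continuousAt {Y : Type*} [PseudoMetricSpace Y] {F : Set Y} {W : ℕ → Set Y} {h : E → F}
    {f : X → Y} (hV : IsShrinkingPartition E V a) (hW : IsShrinkingPartition F W (h ∘ a))
    (hh : Continuous h) (hfE : ∀ x : E, f x = h x) (hfV : ∀ n, MapsTo f (V n) (W n)) :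
    ∀ x ∈ E, ContinuousAt f x := by
  intro p hp
  obtain ⟨N, hN⟩ := hV.exists_index
  have within_E : ContinuousWithinAt f E p := by
    refine (continuousWithinAt_iff_continuousAt_domRestrict f hp).2 ?_
    rw [show E.domRestrict f = Subtype.val ∘ h from funext hfE]
    exact (continuous_subtype_val.comp hh).continuousAt
  have within_compl : ContinuousWithinAt f Eᶜ p := by
    have tendsto_image : Tendsto (fun z => (h (a (N z)) : Y)) (𝓝[Eᶜ] p) (𝓝 (f p)) := by
      rw [hfE ⟨p, hp⟩]
      exact ((continuous_subtype_val.comp hh).tendsto ⟨p, hp⟩).comp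
        (hV.tendsto_index_point hN ⟨p, hp⟩)
    refine tendsto_image.congr_dist ?_
    simp only [dist_comm _ (f _)]
    exact hW.tendsto_dist (hV.tendsto_index hN ⟨p, hp⟩)
      (eventually_mem_nhdsWithin.mono fun z hz => hfV _ (hN z hz))
  simpa only [union_compl_self, continuousWithinAt_univ] using within_E.union within_compl

end IsShrinkingPartition

theorem exists_perm_tendsto_dist_zero {Z : Type*} [PseudoMetricSpace Z] {a b : ℕ → Z}
    (ha : ∀ n, MapClusterPt (a n) atTop b) (hb : ∀ m, MapClusterPt (b m) atTop a) :
    ∃ σ : Equiv.Perm ℕ, Tendsto (fun n => dist (a n) (b (σ n))) atTop (𝓝 0) := by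
  let u : ℕ → ℝ := fun n => 1 / ((n : ℝ) + 1)
  have hu (n : ℕ) : 0 < u n := Nat.one_div_pos_of_nat
  let R : ℕ → ℕ → Prop := fun n m => dist (a n) (b m) < max (u n) (u m)
  have forth (n : ℕ) : ∃ᶠ m in atTop, R n m :=
    ((ha n).frequently (ball_mem_nhds _ (hu n))).mono fun m hm =>
      lt_max_of_lt_left (dist_comm (b m) (a n) ▸ hm)
  have back (m : ℕ) : ∃ᶠ n in atTop, R n m :=
    ((hb m).frequently (ball_mem_nhds _ (hu m))).mono fun n hn => lt_max_of_lt_right hn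
  obtain ⟨φ, hφ, hφR⟩ := extraction_forall_of_frequently forth
  obtain ⟨γ, hγ, hγR⟩ := extraction_forall_of_frequently back
  obtain ⟨σ, hσ, hσR⟩ := Function.Embedding.schroeder_bernstein_of_rel
    hφ.injective hγ.injective R hφR hγR
  have hlim : Tendsto u atTop (𝓝 0) := tendsto_one_div_add_atTop_nhds_zero_nat
  refine ⟨Equiv.ofBijective σ hσ,
    squeeze_zero (fun n => dist_nonneg) (fun n => (hσR n).le) ?_⟩
  simpa using hlim.max (hlim.comp hσ.injective.nat_tendsto_atTop)

namespace IsKnasterReichbachCover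

theorem of_isEmpty {X Y : Type*} [TopologicalSpace X] [TopologicalSpace Y] [Nonempty X] [Nonempty Y]
    (h : (∅ : Set X) ≃ₜ (∅ : Set Y)) :
    IsKnasterReichbachCover ∅ ∅ h {univ} {univ} (fun _ => univ) :=
  ⟨compl_empty (α := X) ▸ .singleton_univ, compl_empty (α := Y) ▸ .singleton_univ,
    bijOn_singleton.2 rfl,
    fun _ _ _ => ⟨fun _ hx => hx.elim, fun _ hy => hy.elim⟩⟩

theorem of_isShrinkingPartition {X Y : Type*} [PseudoMetricSpace X] [PseudoMetricSpace Y]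
    {E : Set X} {F : Set Y} {h : E ≃ₜ F} {V : ℕ → Set X} {W : ℕ → Set Y} {a : ℕ → E}
    (hV : IsShrinkingPartition E V a) (hW : IsShrinkingPartition F W (h ∘ a)) :
    IsKnasterReichbachCover E F h (range V) (range W) (W ∘ Function.invFun V) := by
  have hinv (n : ℕ) : Function.invFun V (V n) = n := Function.leftInverse_invFun hV.injective n
  have hbij : BijOn (W ∘ Function.invFun V) (range V) (range W) := by
    rw [← image_univ, ← bijOn_comp_iff hV.injective.injOn, Function.comp_assoc,
      Function.invFun_comp hV.injective, Function.comp_id, ← image_univ]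
    exact hW.injective.bijOn_image
  refine ⟨hV.isClopenPartitionOf, hW.isClopenPartitionOf, hbij, fun f hfE hfV => ?_⟩
  have himage (n : ℕ) : f '' V n = W n := by
    rw [hfV _ (mem_range_self n), Function.comp_apply, hinv]
  have hsymm (y : F) : f.symm y = h.symm y := by
    rw [Equiv.symm_apply_eq, hfE, h.apply_symm_apply]
  have hV' : IsShrinkingPartition E V (h.symm ∘ h ∘ a) := by
    rwa [← Function.comp_assoc, h.symm_comp_self, Function.id_comp]
  exact ⟨hV.continuousAt hW h.continuous hfE fun n => mapsTo_iff_image_subset.2 (himage n).subset,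
    hW.continuousAt hV' h.symm.continuous hsymm fun n => by
      rw [← himage n]
      rintro _ ⟨x, hx, rfl⟩
      rwa [f.symm_apply_apply]⟩

end IsKnasterReichbachCover

theorem statement7_general {X Y : Type*}
    [TopologicalSpace X] [CompactSpace X] [MetrizableSpace X] [TotallyDisconnectedSpace X]
    [TopologicalSpace Y] [CompactSpace Y] [MetrizableSpace Y] [TotallyDisconnectedSpace Y]
    [Nonempty X] [Nonempty Y] (E : Set X) (F : Set Y)
    (hE : IsClosed E) (hEnd : IsNowhereDense E)
    (hF : IsClosed F) (hFnd : IsNowhereDense F) (h : E ≃ₜ F) :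
    ∃ 𝒱 𝒲 ψ, IsKnasterReichbachCover E F h 𝒱 𝒲 ψ := by
  let _ := metrizableSpaceMetric X
  let _ := metrizableSpaceMetric Y
  have hdE : Dense Eᶜ := (isClosed_isNowhereDense_iff_compl.1 ⟨hE, hEnd⟩).2
  have hdF : Dense Fᶜ := (isClosed_isNowhereDense_iff_compl.1 ⟨hF, hFnd⟩).2
  rcases E.eq_empty_or_nonempty with rfl | hneE
  · obtain rfl : F = ∅ := isEmpty_coe_sort.1 h.symm.toEquiv.isEmpty
    exact ⟨_, _, _, .of_isEmpty h⟩
  have hneF : F.Nonempty := nonempty_coe_sort.1 (hneE.to_subtype.map h)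
  obtain ⟨V, a, hV⟩ :=
    IsShrinkingPartition.exists_of_isClosed isTopologicalBasis_isClopen hE hdE hneE
  obtain ⟨W, b, hW⟩ :=
    IsShrinkingPartition.exists_of_isClosed isTopologicalBasis_isClopen hF hdF hneF
  have cluster_ha (y : F) : MapClusterPt y atTop (h ∘ a) := by
    simpa using (hV.mapClusterPt hdE (h.symm y)).continuousAt_comp h.continuous.continuousAt
  obtain ⟨σ, hσ⟩ := exists_perm_tendsto_dist_zero (a := h ∘ a) (b := b)
    (fun n => hW.mapClusterPt hdF _) fun m => cluster_ha _
  exact ⟨_, _, _, .of_isShrinkingPartition hV (hW.comp_perm σ hσ)⟩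

/-- For every homeomorphism `h : E → F` between closed nowhere dense subsets of
the Cantor set `2^ω` there exists a Knaster-Reichbach cover for
`⟨2^ω \ E, 2^ω \ F, h⟩`. -/
theorem statement7 (E F : Set (ℕ → Bool))
    (hE : IsClosed E) (hEnd : IsNowhereDense E)
    (hF : IsClosed F) (hFnd : IsNowhereDense F) (h : E ≃ₜ F) :
    ∃ (𝒱 𝒲 : Set (Set (ℕ → Bool))) (ψ : Set (ℕ → Bool) → Set (ℕ → Bool)),
      IsKRCover E F h 𝒱 𝒲 ψ := by
  exact statement7_general E F hE hEnd hF hFnd h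
end

section
/- Assume that ⟨⟨h_n, K_n⟩ : n ∈ ω⟩ is a Knaster-Reichbach system on the Cantor set 2^ω. Then there exists a homeomorphism h : 2^ω → 2^ω extending ⋃_{n∈ω} h_n. -/
/-- `⟨⟨h_n, ⟨𝒱_n, 𝒲_n, ψ_n⟩⟩ : n ∈ ω⟩` is a Knaster-Reichbach system with
respect to an admissible metric `m` on `2^ω`: each `h n : E n → F n` is a
homeomorphism between closed nowhere dense subsets of `2^ω`; the `h n` form an
increasing (as graphs) sequence; each `⟨𝒱 n, 𝒲 n, ψ n⟩` is a KR-cover for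
`⟨2^ω \ E n, 2^ω \ F n, h n⟩`; the meshes of `𝒱 n` and `𝒲 n` are at most
`2⁻ⁿ`; the partitions refine each other coherently with the `ψ n`. -/
def IsKRSystem (m : MetricSpace (ℕ → Bool))
    (E F : ℕ → Set (ℕ → Bool)) (h : ∀ n, E n ≃ₜ F n)
    (𝒱 𝒲 : ℕ → Set (Set (ℕ → Bool)))
    (ψ : ℕ → Set (ℕ → Bool) → Set (ℕ → Bool)) : Prop :=
  (∀ n, IsClosed (E n) ∧ IsNowhereDense (E n) ∧ IsClosed (F n) ∧ IsNowhereDense (F n)) ∧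
  (∀ k n, k ≤ n → E k ⊆ E n) ∧
  (∀ k n, k ≤ n → ∀ (x : ℕ → Bool) (hk : x ∈ E k) (hn : x ∈ E n),
    (((h k) ⟨x, hk⟩ : F k) : ℕ → Bool) = (((h n) ⟨x, hn⟩ : F n) : ℕ → Bool)) ∧
  (∀ n, IsKRCover (E n) (F n) (h n) (𝒱 n) (𝒲 n) (ψ n)) ∧
  (∀ n, ∀ U ∈ 𝒱 n, @Metric.diam _ m.toPseudoMetricSpace U ≤ (2 : ℝ)⁻¹ ^ n) ∧
  (∀ n, ∀ U ∈ 𝒲 n, @Metric.diam _ m.toPseudoMetricSpace U ≤ (2 : ℝ)⁻¹ ^ n) ∧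
  (∀ k n, n ≤ k → ∀ U ∈ 𝒱 k, ∃ V ∈ 𝒱 n, U ⊆ V) ∧
  (∀ k n, n ≤ k → ∀ U ∈ 𝒲 k, ∃ V ∈ 𝒲 n, U ⊆ V) ∧
  (∀ k n, n ≤ k → ∀ U ∈ 𝒱 k, ∀ V ∈ 𝒱 n, (U ⊆ V ↔ ψ k U ⊆ ψ n V))

/-! For `k ≥ n`, a bijection `f k` extending `h k` and carrying each piece of the `k`-th cover onto
its partner also respects the `n`-th cover: off `E k` this is refinement, and it persists on `E k`
because the complement of `E k` is dense and `f k` is continuous at the points of `E k`. Hence along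
`f k` the image of every point `{x}` with `x ∈ E n`, and of every piece of the `n`-th cover, is
eventually constant. These sets separate points, so any choice of pointwise cluster points of `f k`
and of its inverse yields mutually inverse maps. The limit bijection realizes every cover, which
gives continuity on each `E n`; elsewhere it follows from the vanishing mesh. -/

open Set Filter Topology Function

section Equivalences

variable {X Y : Type*} {J : Type*}

theorem exists_equiv_image_eq_of_partition {A : J → Set X} {B : J → Set Y}
    (hA : ∀ x, ∃! j, x ∈ A j) (hB : ∀ y, ∃! j, y ∈ B j) (hAB : ∀ j, Nonempty (A j ≃ B j)) :
    ∃ f : X ≃ Y, ∀ j, f '' A j = B j := by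
  let e (j : J) : A j ≃ B j := (hAB j).some
  let f : X ≃ Y := (sigmaEquiv A hA).symm.trans ((Equiv.sigmaCongrRight e).trans (sigmaEquiv B hB))
  have apply_eq : ∀ j (x : A j), f x = e j x := fun j x => by
    have : (sigmaEquiv A hA).symm x = ⟨j, x⟩ := (Equiv.symm_apply_eq _).2 rfl
    simp only [f, Equiv.trans_apply, this]
    rfl
  refine ⟨f, fun j => Subset.antisymm ?_ fun y hy => ?_⟩
  · rintro _ ⟨x, hx, rfl⟩
    rw [apply_eq j ⟨x, hx⟩]
    exact (e j ⟨x, hx⟩).2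
  · refine ⟨(e j).symm ⟨y, hy⟩, ((e j).symm ⟨y, hy⟩).2, ?_⟩
    rw [apply_eq, Equiv.apply_symm_apply]

theorem image_eq_of_forall_mapsTo {f : X → Y} (hf : Surjective f) {A : J → Set X} {B : J → Set Y}
    (hA : ∀ x, ∃ j, x ∈ A j) (hB : Pairwise (Disjoint on B)) (hAB : ∀ j, MapsTo f (A j) (B j))
    (j : J) : f '' A j = B j := by
  refine (hAB j).image_subset.antisymm fun y hy => ?_
  obtain ⟨x, rfl⟩ := hf y
  obtain ⟨i, hi⟩ := hA x
  obtain rfl : i = j := hB.eq (not_disjoint_iff.2 ⟨f x, hAB i hi, hy⟩)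
  exact mem_image_of_mem f hi

theorem exists_equiv_image_eq_of_eventually_image_eq [TopologicalSpace X] [CompactSpace X]
    [TopologicalSpace Y] [CompactSpace Y] {K : Type*} {l : Filter K} [l.NeBot] {f : K → X ≃ Y}
    {A : J → Set X} {B : J → Set Y} (hA : ∀ j, IsClosed (A j)) (hB : ∀ j, IsClosed (B j))
    (hf : ∀ j, ∀ᶠ k in l, f k '' A j = B j)
    (sepA : ∀ x x', x ≠ x' → ∃ j, x ∈ A j ∧ x' ∉ A j)
    (sepB : ∀ y y', y ≠ y' → ∃ j, y ∈ B j ∧ y' ∉ B j) :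
    ∃ H : X ≃ Y, ∀ j, H '' A j = B j := by
  choose H hH using fun x => exists_clusterPt_of_compactSpace (map (fun k => f k x) l)
  choose G hG using fun y => exists_clusterPt_of_compactSpace (map (fun k => (f k).symm y) l)
  have H_mem : ∀ j, ∀ x ∈ A j, H x ∈ B j := fun j x hx =>
    (hB j).mem_of_mapClusterPt (hH x) <| (hf j).mono fun k hk => hk ▸ mem_image_of_mem _ hx
  have G_mem : ∀ j, ∀ y ∈ B j, G y ∈ A j := fun j y hy =>
    (hA j).mem_of_mapClusterPt (hG y) <| (hf j).mono fun k hk => by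
      rwa [← hk, (f k).image_eq_preimage_symm] at hy
  have left_inv : LeftInverse G H := fun x => by
    by_contra hne
    obtain ⟨j, hx, hGHx⟩ := sepA x (G (H x)) (Ne.symm hne)
    exact hGHx (G_mem j _ (H_mem j x hx))
  have right_inv : RightInverse G H := fun y => by
    by_contra hne
    obtain ⟨j, hy, hHGy⟩ := sepB y (H (G y)) (Ne.symm hne)
    exact hHGy (H_mem j _ (G_mem j y hy))
  exact ⟨⟨H, G, left_inv, right_inv⟩, fun j => (image_subset_iff.2 (H_mem j)).antisymm
    fun y hy => ⟨G y, G_mem j y hy, right_inv y⟩⟩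

theorem nonempty_equiv_nat_fun_of_isOpen {α : Type*} [TopologicalSpace α] {U : Set (ℕ → α)}
    (hU : IsOpen U) (hne : U.Nonempty) : Nonempty (U ≃ (ℕ → α)) := by
  obtain ⟨x, hx⟩ := hne
  obtain ⟨I, u, hu, hIu⟩ := isOpen_pi_iff.1 hU x hx
  obtain ⟨n, hn⟩ := I.exists_nat_subset_range
  let prepend (y : ℕ → α) (i : ℕ) : α := if i < n then x i else y (i - n)
  have prepend_mem : ∀ y, prepend y ∈ U := fun y => hIu fun i hi => by
    simpa only [prepend, if_pos (Finset.mem_range.1 (hn hi))] using (hu i hi).2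
  have prepend_injective : Injective prepend := fun y z hyz => funext fun i => by
    simpa [prepend] using congrFun hyz (i + n)
  exact Embedding.antisymm (.subtype (· ∈ U))
    ⟨fun y => ⟨prepend y, prepend_mem y⟩, fun _ _ hyz =>
      prepend_injective (congrArg Subtype.val hyz)⟩

end Equivalences

section VanishingMesh

variable {X : Type*} {ι : ℕ → Type*}

/-- The mesh of the families `V n` tends to zero, in topological terms: around every point, the
members of some `V n` that contain it lie in a prescribed neighbourhood. -/
def HasVanishingMesh [TopologicalSpace X] (V : ∀ n, ι n → Set X) : Prop :=
  ∀ x, ∀ N ∈ 𝓝 x, ∃ n, ∀ i, x ∈ V n i → V n i ⊆ N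

-- `Metric.diam` takes the junk value `0` on unbounded sets, hence `BoundedSpace`.
theorem hasVanishingMesh_of_diam_le [PseudoMetricSpace X] [BoundedSpace X]
    {V : ∀ n, ι n → Set X} {r : ℕ → ℝ} (hr : Tendsto r atTop (𝓝 0))
    (hV : ∀ n i, Metric.diam (V n i) ≤ r n) : HasVanishingMesh V := by
  intro x N hN
  obtain ⟨ε, hε, hball⟩ := Metric.mem_nhds_iff.1 hN
  obtain ⟨n, hn⟩ := (hr.eventually_lt_const hε).exists
  refine ⟨n, fun i hx y hy => hball ?_⟩
  calc
    dist y x ≤ Metric.diam (V n i) := Metric.dist_le_diam_of_mem (Bornology.IsBounded.all _) hy hx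
    _ ≤ r n := hV n i
    _ < ε := hn

end VanishingMesh

section Pieces

variable {X : Type*} {S ι : Type*}

/-- The family consisting of the points `g s` and the sets `V i`. For `g` injective with range the
complement of `⋃ i, V i` and `V` disjoint, this is a partition of the whole space. -/
def pieces (g : S → X) (V : ι → Set X) : S ⊕ ι → Set X :=
  Sum.elim (fun s => {g s}) V

variable {g : S → X} {V : ι → Set X}

theorem exists_mem_pieces (hrange : range g = (⋃ i, V i)ᶜ) (x : X) : ∃ j, x ∈ pieces g V j := by
  by_cases hx : x ∈ ⋃ i, V i
  · obtain ⟨i, hi⟩ := mem_iUnion.1 hx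
    exact ⟨.inr i, hi⟩
  · obtain ⟨s, rfl⟩ : x ∈ range g := hrange ▸ hx
    exact ⟨.inl s, rfl⟩

theorem pairwise_disjoint_pieces (hg : Injective g) (hV : Pairwise (Disjoint on V))
    (hrange : range g = (⋃ i, V i)ᶜ) : Pairwise (Disjoint on pieces g V) := by
  have notMem : ∀ s i, g s ∉ V i := fun s i hs =>
    (hrange ▸ mem_range_self s : g s ∈ (⋃ i, V i)ᶜ) (mem_iUnion_of_mem i hs)
  rintro (s | i) (t | j) hne
  · exact disjoint_singleton.2 (hg.ne (ne_of_apply_ne Sum.inl hne))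
  · exact disjoint_singleton_left.2 (notMem s j)
  · exact disjoint_singleton_right.2 (notMem t i)
  · exact hV (ne_of_apply_ne Sum.inr hne)

theorem existsUnique_mem_pieces (hg : Injective g) (hV : Pairwise (Disjoint on V))
    (hrange : range g = (⋃ i, V i)ᶜ) (x : X) : ∃! j, x ∈ pieces g V j := by
  obtain ⟨j, hj⟩ := exists_mem_pieces hrange x
  exact ⟨j, hj, fun i hi =>
    (pairwise_disjoint_pieces hg hV hrange).eq (not_disjoint_iff.2 ⟨x, hi, hj⟩)⟩

theorem isClosed_pieces [TopologicalSpace X] [T1Space X] (hV : ∀ i, IsClosed (V i)) (j : S ⊕ ι) :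
    IsClosed (pieces g V j) := by
  rcases j with s | i
  · exact isClosed_singleton
  · exact hV i

theorem HasVanishingMesh.exists_pieces_separating [TopologicalSpace X] [T1Space X]
    {S ι : ℕ → Type*} {g : ∀ n, S n → X} {V : ∀ n, ι n → Set X} (hV : HasVanishingMesh V)
    (hrange : ∀ n, range (g n) = (⋃ i, V n i)ᶜ) {x x' : X} (hne : x ≠ x') :
    ∃ n j, x ∈ pieces (g n) (V n) j ∧ x' ∉ pieces (g n) (V n) j := by
  obtain ⟨n, hn⟩ := hV x {x'}ᶜ (isOpen_compl_singleton.mem_nhds hne)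
  obtain ⟨s | i, hj⟩ := exists_mem_pieces (hrange n) x
  · obtain rfl : x = g n s := hj
    exact ⟨n, .inl s, rfl, Ne.symm hne⟩
  · exact ⟨n, .inr i, hj, fun hx' => hn i hj hx' rfl⟩

end Pieces

section Cover

variable {X Y : Type*} {ι : Type*} {E : Set X} {F : Set Y}

/-- The bijection `f` extends `h` and carries each `V i` onto `W i`. -/
def IsRealization (h : E ≃ F) (V : ι → Set X) (W : ι → Set Y) (f : X ≃ Y) : Prop :=
  (∀ x : E, f x = h x) ∧ ∀ i, f '' V i = W i

theorem isRealization_iff_image_pieces {h : E ≃ F} {V : ι → Set X} {W : ι → Set Y} {f : X ≃ Y} :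
    IsRealization h V W f ↔
      ∀ j, f '' pieces Subtype.val V j = pieces (fun x => (h x : Y)) W j := by
  simp only [IsRealization, pieces, Sum.forall, Sum.elim_inl, Sum.elim_inr, image_singleton,
    singleton_eq_singleton_iff]

/-- A Knaster-Reichbach cover between two arbitrary spaces, for a bijection `h : E → F`. The
partitions are indexed so that `V i` corresponds to `W i`. Corresponding pieces are required to be
equipotent, since otherwise no bijection realizes the cover and `continuousAt` is void. -/
structure IsIndexedKRCover [TopologicalSpace X] [TopologicalSpace Y] (h : E ≃ F) (V : ι → Set X)
    (W : ι → Set Y) : Prop where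
  isClopen_left : ∀ i, IsClopen (V i)
  isClosed_right : ∀ i, IsClosed (W i)
  disjoint_left : Pairwise (Disjoint on V)
  disjoint_right : Pairwise (Disjoint on W)
  iUnion_left : ⋃ i, V i = Eᶜ
  iUnion_right : ⋃ i, W i = Fᶜ
  equipotent : ∀ i, Nonempty (V i ≃ W i)
  continuousAt : ∀ f : X ≃ Y, IsRealization h V W f → ∀ x ∈ E, ContinuousAt f x

namespace IsIndexedKRCover

variable [TopologicalSpace X] [TopologicalSpace Y] {h : E ≃ F} {V : ι → Set X} {W : ι → Set Y}

theorem range_val (hc : IsIndexedKRCover h V W) : range (Subtype.val : E → X) = (⋃ i, V i)ᶜ := by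
  rw [Subtype.range_coe, hc.iUnion_left, compl_compl]

theorem range_apply (hc : IsIndexedKRCover h V W) :
    range (fun x => (h x : Y)) = (⋃ i, W i)ᶜ := by
  rw [hc.iUnion_right, compl_compl]
  exact (h.surjective.range_comp Subtype.val).trans Subtype.range_coe

theorem pairwise_disjoint_pieces_right (hc : IsIndexedKRCover h V W) :
    Pairwise (Disjoint on pieces (fun x => (h x : Y)) W) :=
  pairwise_disjoint_pieces (Subtype.val_injective.comp h.injective) hc.disjoint_right
    hc.range_apply

theorem exists_isRealization (hc : IsIndexedKRCover h V W) :
    ∃ f : X ≃ Y, IsRealization h V W f := by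
  simp only [isRealization_iff_image_pieces]
  refine exists_equiv_image_eq_of_partition
    (existsUnique_mem_pieces Subtype.val_injective hc.disjoint_left hc.range_val)
    (existsUnique_mem_pieces (Subtype.val_injective.comp h.injective) hc.disjoint_right
      hc.range_apply) ?_
  rintro (x | i)
  · exact ⟨Equiv.ofUnique ({(x : X)} : Set X) ({(h x : Y)} : Set Y)⟩
  · exact hc.equipotent i

end IsIndexedKRCover

end Cover

section System

variable {X Y : Type*} [TopologicalSpace X] [TopologicalSpace Y] {ι : ℕ → Type*}
  {E : ℕ → Set X} {F : ℕ → Set Y}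

/-- A Knaster-Reichbach system between two arbitrary spaces, for bijections `h n : E n → F n`. The
meshes are only required to vanish topologically, and the refinement of the partitions of `X` and
of `Y`, together with its compatibility with the pairing of pieces, is a single condition. -/
structure IsIndexedKRSystem (h : ∀ n, E n ≃ F n) (V : ∀ n, ι n → Set X)
    (W : ∀ n, ι n → Set Y) : Prop where
  cover : ∀ n, IsIndexedKRCover (h n) (V n) (W n)
  interior_eq_empty : ∀ n, interior (E n) = ∅
  monotone : Monotone E
  apply_inclusion : ∀ {n k} (hnk : n ≤ k) (x : E n), (h k (inclusion (monotone hnk) x) : Y) = h n x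
  exists_coarser : ∀ {n k}, n ≤ k → ∀ i, ∃ j, V k i ⊆ V n j ∧ W k i ⊆ W n j
  mesh_left : HasVanishingMesh V
  mesh_right : HasVanishingMesh W

namespace IsIndexedKRSystem

variable {h : ∀ n, E n ≃ F n} {V : ∀ n, ι n → Set X} {W : ∀ n, ι n → Set Y}

theorem exists_mem_of_notMem (hs : IsIndexedKRSystem h V W) {n : ℕ} {x : X} (hx : x ∉ E n) :
    ∃ i, x ∈ V n i :=
  mem_iUnion.1 ((hs.cover n).iUnion_left ▸ hx)

theorem mapsTo_diff_of_le (hs : IsIndexedKRSystem h V W) {n k : ℕ} (hnk : n ≤ k) {f : X ≃ Y}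
    (hf : IsRealization (h k) (V k) (W k) f) (i : ι n) : MapsTo f (V n i \ E k) (W n i) := by
  rintro x ⟨hxi, hxE⟩
  obtain ⟨l, hl⟩ := hs.exists_mem_of_notMem hxE
  obtain ⟨j, hVj, hWj⟩ := hs.exists_coarser hnk l
  obtain rfl : j = i := (hs.cover n).disjoint_left.eq (not_disjoint_iff.2 ⟨x, hVj hl, hxi⟩)
  exact hWj (hf.2 l ▸ mem_image_of_mem f hl)

theorem mapsTo_of_le (hs : IsIndexedKRSystem h V W) {n k : ℕ} (hnk : n ≤ k) {f : X ≃ Y}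
    (hf : IsRealization (h k) (V k) (W k) f) (i : ι n) : MapsTo f (V n i) (W n i) := by
  intro x hx
  by_cases hxE : x ∈ E k
  · have dense_compl : Dense (E k)ᶜ := interior_eq_empty_iff_dense_compl.1 (hs.interior_eq_empty k)
    have mem_closure_diff : x ∈ closure (V n i \ E k) :=
      dense_compl.open_subset_closure_inter ((hs.cover n).isClopen_left i).isOpen hx
    have image_mem_closure : f x ∈ closure (f '' (V n i \ E k)) :=
      mem_closure_image ((hs.cover k).continuousAt f hf x hxE) mem_closure_diff
    exact closure_minimal (hs.mapsTo_diff_of_le hnk hf i).image_subset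
      ((hs.cover n).isClosed_right i) image_mem_closure
  · exact hs.mapsTo_diff_of_le hnk hf i ⟨hx, hxE⟩

theorem isRealization_of_le (hs : IsIndexedKRSystem h V W) {n k : ℕ} (hnk : n ≤ k) {f : X ≃ Y}
    (hf : IsRealization (h k) (V k) (W k) f) : IsRealization (h n) (V n) (W n) f := by
  refine isRealization_iff_image_pieces.2 <| image_eq_of_forall_mapsTo f.surjective
    (exists_mem_pieces (hs.cover n).range_val) (hs.cover n).pairwise_disjoint_pieces_right ?_
  rintro (x | i)
  · rintro _ rfl
    exact (hf.1 (inclusion (hs.monotone hnk) x)).trans (hs.apply_inclusion hnk x)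
  · exact hs.mapsTo_of_le hnk hf i

theorem exists_isRealization [CompactSpace X] [T1Space X] [CompactSpace Y] [T1Space Y]
    (hs : IsIndexedKRSystem h V W) : ∃ H : X ≃ Y, ∀ n, IsRealization (h n) (V n) (W n) H := by
  choose f hf using fun k => (hs.cover k).exists_isRealization
  have eventually_image_eq (p : Σ n, E n ⊕ ι n) : ∀ᶠ k in atTop,
      f k '' pieces Subtype.val (V p.1) p.2 = pieces (fun x => (h p.1 x : Y)) (W p.1) p.2 :=
    (eventually_ge_atTop p.1).mono fun k hk =>
      isRealization_iff_image_pieces.1 (hs.isRealization_of_le hk (hf k)) p.2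
  obtain ⟨H, hH⟩ := exists_equiv_image_eq_of_eventually_image_eq
    (A := fun p : Σ n, E n ⊕ ι n => pieces Subtype.val (V p.1) p.2)
    (B := fun p => pieces (fun x => (h p.1 x : Y)) (W p.1) p.2)
    (fun p => isClosed_pieces (fun i => ((hs.cover p.1).isClopen_left i).isClosed) p.2)
    (fun p => isClosed_pieces (hs.cover p.1).isClosed_right p.2) eventually_image_eq
    (fun x x' hne => Sigma.exists.2 <|
      hs.mesh_left.exists_pieces_separating (fun n => (hs.cover n).range_val) hne)
    (fun y y' hne => Sigma.exists.2 <|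
      hs.mesh_right.exists_pieces_separating (fun n => (hs.cover n).range_apply) hne)
  exact ⟨H, fun n => isRealization_iff_image_pieces.2 fun j => hH ⟨n, j⟩⟩

theorem continuous_of_isRealization (hs : IsIndexedKRSystem h V W) {H : X ≃ Y}
    (hH : ∀ n, IsRealization (h n) (V n) (W n) H) : Continuous H := by
  refine continuous_iff_continuousAt.2 fun x N hN => ?_
  obtain ⟨n, hn⟩ := hs.mesh_right (H x) N hN
  by_cases hx : x ∈ E n
  · exact (hs.cover n).continuousAt H (hH n) x hx hN
  · obtain ⟨i, hi⟩ := hs.exists_mem_of_notMem hx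
    have image_subset : H '' V n i ⊆ N := by
      rw [(hH n).2 i]
      exact hn i ((hH n).2 i ▸ mem_image_of_mem H hi)
    exact mem_map.2 <| mem_of_superset (((hs.cover n).isClopen_left i).isOpen.mem_nhds hi)
      (image_subset_iff.1 image_subset)

end IsIndexedKRSystem

end System

theorem IsKRCover.isIndexedKRCover {E F : Set (ℕ → Bool)} {h : E ≃ₜ F}
    {𝒱 𝒲 : Set (Set (ℕ → Bool))} {ψ : Set (ℕ → Bool) → Set (ℕ → Bool)}
    (hc : IsKRCover E F h 𝒱 𝒲 ψ) :
    IsIndexedKRCover h.toEquiv (fun U : 𝒱 => (U : Set (ℕ → Bool))) (fun U : 𝒱 => ψ U) := by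
  obtain ⟨⟨hV, hVdisj, hVunion⟩, ⟨hW, hWdisj, hWunion⟩, hψ, hcont⟩ := hc
  have hψW (U : 𝒱) : ψ U ∈ 𝒲 := hψ.mapsTo U.2
  exact {
    isClopen_left := fun U => (hV U U.2).1
    isClosed_right := fun U => (hW _ (hψW U)).1.isClosed
    disjoint_left := fun U U' hne => hVdisj U.2 U'.2 (Subtype.coe_ne_coe.2 hne)
    disjoint_right := fun U U' hne =>
      hWdisj (hψW U) (hψW U') (hψ.injOn.ne U.2 U'.2 (Subtype.coe_ne_coe.2 hne))
    iUnion_left := by rw [← sUnion_eq_iUnion, hVunion]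
    iUnion_right := by rw [← hWunion, ← hψ.image_eq, sUnion_image, biUnion_eq_iUnion]
    equipotent := fun U => by
      obtain ⟨e⟩ := nonempty_equiv_nat_fun_of_isOpen (hV U U.2).1.isOpen (hV U U.2).2
      obtain ⟨e'⟩ := nonempty_equiv_nat_fun_of_isOpen (hW _ (hψW U)).1.isOpen
        (hW _ (hψW U)).2
      exact ⟨e.trans e'.symm⟩
    continuousAt := fun f hf => (hcont f hf.1 fun U hU => hf.2 ⟨U, hU⟩).1 }

theorem IsKRSystem.isIndexedKRSystem {m : MetricSpace (ℕ → Bool)}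
    (hm : m.toPseudoMetricSpace.toUniformSpace.toTopologicalSpace
      = (inferInstance : TopologicalSpace (ℕ → Bool)))
    {E F : ℕ → Set (ℕ → Bool)} {h : ∀ n, E n ≃ₜ F n} {𝒱 𝒲 : ℕ → Set (Set (ℕ → Bool))}
    {ψ : ℕ → Set (ℕ → Bool) → Set (ℕ → Bool)} (hsys : IsKRSystem m E F h 𝒱 𝒲 ψ) :
    IsIndexedKRSystem (fun n => (h n).toEquiv)
      (fun n (U : 𝒱 n) => (U : Set (ℕ → Bool))) (fun n (U : 𝒱 n) => ψ n U) := by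
  obtain ⟨hEF, hmono, hext, hcov, hdiamV, hdiamW, hrefine, -, hψ⟩ := hsys
  let := m.replaceTopology hm.symm
  have tendsto_mesh : Tendsto (fun n => (2 : ℝ)⁻¹ ^ n) atTop (𝓝 0) :=
    tendsto_pow_atTop_nhds_zero_of_lt_one (by norm_num) (by norm_num)
  exact {
    cover := fun n => (hcov n).isIndexedKRCover
    interior_eq_empty := fun n => (hEF n).1.isNowhereDense_iff.1 (hEF n).2.1
    monotone := fun n k hnk => hmono n k hnk
    apply_inclusion := fun hnk x => (hext _ _ hnk x x.2 _).symm
    exists_coarser := fun {n k} hnk U => by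
      obtain ⟨U', hU', hsub⟩ := hrefine k n hnk U U.2
      exact ⟨⟨U', hU'⟩, hsub, (hψ k n hnk U U.2 U' hU').1 hsub⟩
    mesh_left := hasVanishingMesh_of_diam_le tendsto_mesh fun n U => hdiamV n U U.2
    mesh_right := hasVanishingMesh_of_diam_le tendsto_mesh fun n U =>
      hdiamW n _ ((hcov n).2.2.1.mapsTo U.2) }

theorem statement8_general {X Y : Type*} [TopologicalSpace X] [CompactSpace X] [T1Space X]
    [TopologicalSpace Y] [CompactSpace Y] [T2Space Y] {ι : ℕ → Type*} {E : ℕ → Set X}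
    {F : ℕ → Set Y} {h : ∀ n, E n ≃ F n} {V : ∀ n, ι n → Set X} {W : ∀ n, ι n → Set Y}
    (hs : IsIndexedKRSystem h V W) : ∃ H : X ≃ₜ Y, ∀ n (x : E n), H x = h n x := by
  obtain ⟨H, hH⟩ := hs.exists_isRealization
  exact ⟨(hs.continuous_of_isRealization hH).homeoOfEquivCompactToT2, fun n => (hH n).1⟩

/-- If `⟨⟨h_n, K_n⟩ : n ∈ ω⟩` is a Knaster-Reichbach system on the Cantor set
`2^ω` (with respect to an admissible metric), then there exists a homeomorphism
`H : 2^ω → 2^ω` extending `⋃_{n∈ω} h_n`. -/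
theorem statement8 (m : MetricSpace (ℕ → Bool))
    (hm : m.toPseudoMetricSpace.toUniformSpace.toTopologicalSpace
        = (inferInstance : TopologicalSpace (ℕ → Bool)))
    (E F : ℕ → Set (ℕ → Bool)) (h : ∀ n, E n ≃ₜ F n)
    (𝒱 𝒲 : ℕ → Set (Set (ℕ → Bool)))
    (ψ : ℕ → Set (ℕ → Bool) → Set (ℕ → Bool))
    (hsys : IsKRSystem m E F h 𝒱 𝒲 ψ) :
    ∃ H : (ℕ → Bool) ≃ₜ (ℕ → Bool),
      ∀ (n : ℕ) (x : ℕ → Bool) (hx : x ∈ E n),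
        H x = (((h n) ⟨x, hx⟩ : F n) : ℕ → Bool) := by
  obtain ⟨H, hH⟩ := statement8_general (hsys.isIndexedKRSystem hm)
  exact ⟨H, fun n x hx => hH n ⟨x, hx⟩⟩
end

section
/- Let X be a subspace of the Cantor set 2^ω, and assume ⟨⟨h_n, K_n⟩ : n ∈ ω⟩ is a Knaster-Reichbach system (with h_n : E_n → F_n) satisfying additionally: (7) 2^ω \ ⋃_{n∈ω} E_n ⊆ X; (8) 2^ω \ ⋃_{n∈ω} F_n ⊆ X; (9) h_n[X ∩ E_n] = X ∩ F_n for each n. Then there exists a homeomorphism h : 2^ω → 2^ω extending ⋃_{n∈ω} h_n and satisfying h[X] = X. -/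
/-!
Let `Aₙ` be the union of the graph of `hₙ` and of all the boxes `V × ψₙ(V)` with `V ∈ 𝒱ₙ`. Any
bijection whose graph lies in `Aₙ` is continuous at the points of `Eₙ`; since the complement of
`Eₙ` is dense, it follows that the graph of `hₙ` lies in `Aₘ` for every `m ≤ n`. Compactness and the
shrinking of the cells then make `⋂ₙ Aₙ` the graph of a bijection `H`. It is continuous at the
points of `⋃ₙ Eₙ` by the covering property, and at any other point `x` because `H` maps the small
cells around `x` to small cells around `H x`. Everything is symmetric in the two sides, so `H⁻¹` is
continuous as well. Finally `H` preserves `X` because the `hₙ` do, while `H` maps the complement of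
`⋃ₙ Eₙ` onto that of `⋃ₙ Fₙ`, and both lie in `X`.
-/

open Filter Function Set Topology

section CantorSpace

instance pi_perfectSpace {ι : Type*} [Infinite ι] {X : ι → Type*} [∀ i, TopologicalSpace (X i)]
    [∀ i, Nontrivial (X i)] : PerfectSpace (∀ i, X i) := by
  classical
  refine perfectSpace_iff_forall_not_isolated.2 fun x ↦ ?_
  choose y hy using fun i ↦ exists_ne (x i)
  have update_tendsto : Tendsto (fun i ↦ update x i (y i)) cofinite (𝓝 x) := by
    refine tendsto_pi_nhds.2 fun j ↦ tendsto_const_nhds.congr' ?_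
    filter_upwards [(finite_singleton j).compl_mem_cofinite] with i hij
    exact (update_of_ne (Ne.symm hij) (y i) x).symm
  have update_ne (i : ι) : update x i (y i) ≠ x := fun h ↦ hy i (by simpa using congrFun h i)
  exact (tendsto_nhdsWithin_iff.2 ⟨update_tendsto, .of_forall update_ne⟩).neBot

theorem nonempty_equiv_cantor_of_isClopen {U : Set (ℕ → Bool)} (hU : IsClopen U)
    (hne : U.Nonempty) : Nonempty (U ≃ (ℕ → Bool)) := by
  let := TopologicalSpace.upgradeIsCompletelyMetrizable (ℕ → Bool)
  have hperf : Perfect U := ⟨hU.isClosed, hU.isOpen.preperfect⟩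
  obtain ⟨f, hfU, -, hf⟩ := hperf.exists_nat_bool_injection hne
  exact Embedding.antisymm (.subtype _)
    ⟨fun x ↦ ⟨f x, hfU (mem_range_self x)⟩, fun _ _ h ↦ hf (congrArg Subtype.val h)⟩

end CantorSpace

section Shrinking

variable {ι : ℕ → Type*} {α : Type*}

/-- The cells of a sequence of families of sets become small at every point: every neighbourhood
of `x` contains, for some `n`, all the cells of the `n`-th family around `x`. The families need not
cover the space. -/
def HasShrinkingCells [TopologicalSpace α] (V : ∀ n, ι n → Set α) : Prop :=
  ∀ x, ∀ O ∈ 𝓝 x, ∃ n, ∀ i, x ∈ V n i → V n i ⊆ O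

theorem HasShrinkingCells.eq_of_forall_exists_mem [TopologicalSpace α] [T1Space α]
    {V : ∀ n, ι n → Set α} (hV : HasShrinkingCells V) {x y : α}
    (hxy : ∀ n, ∃ i, x ∈ V n i ∧ y ∈ V n i) : x = y := by
  by_contra hne
  obtain ⟨n, hn⟩ := hV x {y}ᶜ (isOpen_compl_singleton.mem_nhds hne)
  obtain ⟨i, hx, hy⟩ := hxy n
  exact hn i hx hy rfl

theorem hasShrinkingCells_of_tendsto_diam [t : TopologicalSpace α] [CompactSpace α]
    (m : PseudoMetricSpace α) (hm : m.toUniformSpace.toTopologicalSpace = t)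
    {V : ∀ n, ι n → Set α} {d : ℕ → ℝ} (hd : Tendsto d atTop (𝓝 0))
    (hV : ∀ n i, Metric.diam (V n i) ≤ d n) : HasShrinkingCells V := by
  subst hm
  intro x O hO
  obtain ⟨ε, hε, hball⟩ := Metric.mem_nhds_iff.1 hO
  obtain ⟨n, hn⟩ := (hd.eventually (gt_mem_nhds hε)).exists
  refine ⟨n, fun i hx y hy ↦ hball ?_⟩
  calc dist y x ≤ Metric.diam (V n i) :=
        Metric.dist_le_diam_of_mem Metric.isBounded_of_compactSpace hy hx
    _ ≤ d n := hV n i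
    _ < ε := hn

end Shrinking

/-- A bijection `h` between subsets `E` and `F` of two spaces together with partitions `V` and `W`
of their complements. The correspondence `ψ` of the cells is encoded by using the same index type
for both partitions, which makes the notion symmetric. -/
structure CellMatching (ι α β : Type*) where
  E : Set α
  F : Set β
  h : E ≃ F
  V : ι → Set α
  W : ι → Set β
  disjoint_V : Pairwise (Disjoint on V)
  disjoint_W : Pairwise (Disjoint on W)
  iUnion_V : ⋃ i, V i = Eᶜ
  iUnion_W : ⋃ i, W i = Fᶜ

namespace CellMatching

variable {ι α β : Type*} {M : CellMatching ι α β} {x : α} {y : β} {i j : ι}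

/-- The cell matching with the roles of the two spaces exchanged. -/
def symm (M : CellMatching ι α β) : CellMatching ι β α where
  E := M.F
  F := M.E
  h := M.h.symm
  V := M.W
  W := M.V
  disjoint_V := M.disjoint_W
  disjoint_W := M.disjoint_V
  iUnion_V := M.iUnion_W
  iUnion_W := M.iUnion_V

/-- The graph of the partial bijection of a cell matching, as a subset of the product. -/
def graph (M : CellMatching ι α β) : Set (α × β) :=
  {p | ∃ hx : p.1 ∈ M.E, (M.h ⟨p.1, hx⟩ : β) = p.2}

/-- The region in which the graph of a map must lie in order to extend the partial bijection and to
respect the correspondence of the cells. -/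
def region (M : CellMatching ι α β) : Set (α × β) := M.graph ∪ ⋃ i, M.V i ×ˢ M.W i

theorem mem_graph : (x, y) ∈ M.graph ↔ ∃ hx : x ∈ M.E, (M.h ⟨x, hx⟩ : β) = y := .rfl

theorem mem_region : (x, y) ∈ M.region ↔ (x, y) ∈ M.graph ∨ ∃ i, x ∈ M.V i ∧ y ∈ M.W i := by
  simp only [region, mem_union, mem_iUnion, mem_prod]

theorem mk_mem_graph (M : CellMatching ι α β) (x : M.E) : ((x : α), (M.h x : β)) ∈ M.graph :=
  ⟨x.2, rfl⟩

theorem mem_graph_symm : (y, x) ∈ M.symm.graph ↔ (x, y) ∈ M.graph := by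
  simp only [mem_graph]
  constructor
  · rintro ⟨hy, rfl⟩
    exact ⟨(M.h.symm ⟨y, hy⟩).2, congrArg Subtype.val (M.h.apply_symm_apply ⟨y, hy⟩)⟩
  · rintro ⟨hx, rfl⟩
    exact ⟨(M.h ⟨x, hx⟩).2, congrArg Subtype.val (M.h.symm_apply_apply ⟨x, hx⟩)⟩

theorem mem_region_symm : (y, x) ∈ M.symm.region ↔ (x, y) ∈ M.region :=
  mem_region.trans <|
    (or_congr mem_graph_symm (exists_congr fun _ ↦ and_comm)).trans mem_region.symm

theorem eq_of_mem_graph {y' : β} (h : (x, y) ∈ M.graph) (h' : (x, y') ∈ M.graph) : y = y' := by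
  obtain ⟨_, rfl⟩ := mem_graph.1 h
  obtain ⟨_, rfl⟩ := mem_graph.1 h'
  rfl

theorem eq_of_mem_V (hi : x ∈ M.V i) (hj : x ∈ M.V j) : i = j :=
  M.disjoint_V.eq (not_disjoint_iff.2 ⟨x, hi, hj⟩)

theorem exists_mem_V_iff : (∃ i, x ∈ M.V i) ↔ x ∉ M.E := by
  rw [← mem_iUnion, M.iUnion_V, mem_compl_iff]

theorem mem_graph_of_mem_region (h : (x, y) ∈ M.region) (hx : x ∈ M.E) : (x, y) ∈ M.graph :=
  (mem_region.1 h).resolve_right fun ⟨i, hi, _⟩ ↦ exists_mem_V_iff.1 ⟨i, hi⟩ hx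

theorem mem_W_of_mem_region (h : (x, y) ∈ M.region) (hx : x ∈ M.V i) : y ∈ M.W i := by
  rcases mem_region.1 h with ⟨hE, -⟩ | ⟨j, hj, hy⟩
  · exact absurd hE (exists_mem_V_iff.1 ⟨i, hx⟩)
  · rwa [eq_of_mem_V hx hj]

theorem mem_V_of_mem_region (h : (x, y) ∈ M.region) (hy : y ∈ M.W i) : x ∈ M.V i :=
  mem_W_of_mem_region (M := M.symm) (mem_region_symm.2 h) hy

theorem mem_E_of_mem_region (h : (x, y) ∈ M.region) (hy : y ∈ M.F) : x ∈ M.E := by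
  by_contra hx
  obtain ⟨i, hi⟩ := exists_mem_V_iff.2 hx
  exact (exists_mem_V_iff (M := M.symm)).1 ⟨i, mem_W_of_mem_region h hi⟩ hy

theorem exists_equiv_forall_mem_region (M : CellMatching ι α β) (g : ∀ i, M.V i ≃ M.W i) :
    ∃ f : α ≃ β, ∀ x, (x, f x) ∈ M.region := by
  classical
  let cells : ↥(M.Eᶜ) ≃ ↥(M.Fᶜ) :=
    (Equiv.setCongr M.iUnion_V.symm).trans <| (unionEqSigmaOfDisjoint M.disjoint_V).trans <|
      (Equiv.sigmaCongrRight g).trans <| (unionEqSigmaOfDisjoint M.disjoint_W).symm.trans <|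
        Equiv.setCongr M.iUnion_W
  let f : α ≃ β := (Equiv.Set.sumCompl M.E).symm.trans <|
    (M.h.sumCongr cells).trans <| Equiv.Set.sumCompl M.F
  refine ⟨f, fun x ↦ ?_⟩
  by_cases hx : x ∈ M.E
  · have hfx : f x = M.h ⟨x, hx⟩ := by simp [f, Equiv.Set.sumCompl_symm_apply_of_mem hx]
    exact Or.inl ⟨hx, hfx.symm⟩
  · let p := unionEqSigmaOfDisjoint M.disjoint_V ⟨x, M.iUnion_V.symm ▸ hx⟩
    have hpx : (p.2 : α) = x := coe_snd_unionEqSigmaOfDisjoint _ _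
    have hfx : f x = g p.1 p.2 := by
      simp [f, cells, p, Equiv.Set.sumCompl_symm_apply_of_notMem hx]
    exact mem_region.2 <| Or.inr ⟨p.1, hpx ▸ p.2.2, hfx ▸ (g p.1 p.2).2⟩

variable [TopologicalSpace α] [TopologicalSpace β]

/-- A cell matching is a Knaster–Reichbach cover if `E` and `F` have dense complements, the cells
are clopen, and every bijection respecting the matching is continuous at the points of `E`, with
inverse continuous at the points of `F`. Corresponding cells are required to be equipotent, as they
automatically are in the Cantor set, since otherwise no such bijection exists. -/
structure IsKnasterReichbach (M : CellMatching ι α β) : Prop where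
  isClopen_V : ∀ i, IsClopen (M.V i)
  isClopen_W : ∀ i, IsClopen (M.W i)
  dense_compl_E : Dense M.Eᶜ
  dense_compl_F : Dense M.Fᶜ
  equipotent : ∀ i, Nonempty (M.V i ≃ M.W i)
  continuousAt : ∀ f : α ≃ β, (∀ x, (x, f x) ∈ M.region) → ∀ x ∈ M.E, ContinuousAt f x
  continuousAt_symm :
    ∀ f : α ≃ β, (∀ x, (x, f x) ∈ M.region) → ∀ y ∈ M.F, ContinuousAt f.symm y

theorem IsKnasterReichbach.symm (hM : M.IsKnasterReichbach) : M.symm.IsKnasterReichbach where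
  isClopen_V := hM.isClopen_W
  isClopen_W := hM.isClopen_V
  dense_compl_E := hM.dense_compl_F
  dense_compl_F := hM.dense_compl_E
  equipotent i := (hM.equipotent i).map Equiv.symm
  continuousAt f hf := hM.continuousAt_symm f.symm fun x ↦
    mem_region_symm.1 (by simpa using hf (f.symm x))
  continuousAt_symm f hf := hM.continuousAt f.symm fun x ↦
    mem_region_symm.1 (by simpa using hf (f.symm x))

end CellMatching

open CellMatching

section System

variable {ι : ℕ → Type*} {α β : Type*} [TopologicalSpace α] [TopologicalSpace β]

/-- A Knaster–Reichbach system between two spaces: a sequence of Knaster–Reichbach covers whose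
partial bijections extend each other and whose partitions refine each other coherently, with cells
shrinking to points on both sides. -/
structure IsKnasterReichbachSystem (K : ∀ n, CellMatching (ι n) α β) : Prop where
  isKnasterReichbach : ∀ n, (K n).IsKnasterReichbach
  graph_mono : Monotone fun n ↦ (K n).graph
  cells_refine : ∀ ⦃n k⦄, n ≤ k → ∀ i, ∃ j, (K k).V i ⊆ (K n).V j ∧ (K k).W i ⊆ (K n).W j
  shrinking_V : HasShrinkingCells fun n ↦ (K n).V
  shrinking_W : HasShrinkingCells fun n ↦ (K n).W

namespace IsKnasterReichbachSystem

variable {K : ∀ n, CellMatching (ι n) α β}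

theorem symm (hK : IsKnasterReichbachSystem K) :
    IsKnasterReichbachSystem fun n ↦ (K n).symm where
  isKnasterReichbach n := (hK.isKnasterReichbach n).symm
  graph_mono _ _ hnk := fun ⟨_, _⟩ hp ↦
    mem_graph_symm.2 (hK.graph_mono hnk (mem_graph_symm.1 hp))
  cells_refine _ _ hnk i := (hK.cells_refine hnk i).imp fun _ ↦ And.symm
  shrinking_V := hK.shrinking_W
  shrinking_W := hK.shrinking_V

theorem W_subset_W (hK : IsKnasterReichbachSystem K) {n k : ℕ} (hnk : n ≤ k) {x : α}
    {i : ι k} {j : ι n} (hi : x ∈ (K k).V i) (hj : x ∈ (K n).V j) : (K k).W i ⊆ (K n).W j := by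
  obtain ⟨j', hV, hW⟩ := hK.cells_refine hnk i
  rwa [eq_of_mem_V hj (hV hi)]

theorem graph_subset_region (hK : IsKnasterReichbachSystem K) {n k : ℕ} (hnk : n ≤ k) :
    (K k).graph ⊆ (K n).region := by
  rintro ⟨x, y⟩ hxy
  by_cases hxn : x ∈ (K n).E
  · have hn := (K n).mk_mem_graph ⟨x, hxn⟩
    rw [eq_of_mem_graph hxy (hK.graph_mono hnk hn)]
    exact Or.inl hn
  · obtain ⟨j, hj⟩ := exists_mem_V_iff.2 hxn
    obtain ⟨f, hf⟩ := (K k).exists_equiv_forall_mem_region fun i ↦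
      ((hK.isKnasterReichbach k).equipotent i).some
    have hxk : x ∈ (K k).E := hxy.1
    have hcont : ContinuousAt f x := (hK.isKnasterReichbach k).continuousAt f hf x hxk
    have hmaps : MapsTo f ((K n).V j ∩ (K k).Eᶜ) ((K n).W j) := by
      rintro z ⟨hzj, hzk⟩
      obtain ⟨i, hzi⟩ := exists_mem_V_iff.2 hzk
      exact hK.W_subset_W hnk hzi hzj (mem_W_of_mem_region (hf z) hzi)
    have hclosure : x ∈ closure ((K n).V j ∩ (K k).Eᶜ) :=
      (hK.isKnasterReichbach k).dense_compl_E.open_subset_closure_inter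
        ((hK.isKnasterReichbach n).isClopen_V j).isOpen hj
    have hfx : f x ∈ (K n).W j :=
      ((hK.isKnasterReichbach n).isClopen_W j).isClosed.closure_eq ▸
        hcont.continuousWithinAt.mem_closure hclosure hmaps
    rw [eq_of_mem_graph hxy (mem_graph_of_mem_region (hf x) hxk)]
    exact mem_region.2 <| Or.inr ⟨j, hj, hfx⟩

theorem exists_forall_mem_region [CompactSpace β] (hK : IsKnasterReichbachSystem K) (x : α) :
    ∃ y, ∀ n, (x, y) ∈ (K n).region := by
  by_cases hx : ∃ k, x ∈ (K k).E
  · obtain ⟨k, hk⟩ := hx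
    refine ⟨(K k).h ⟨x, hk⟩, fun n ↦ ?_⟩
    have hgraph := (K k).mk_mem_graph ⟨x, hk⟩
    rcases le_total n k with hnk | hkn
    · exact hK.graph_subset_region hnk hgraph
    · exact Or.inl (hK.graph_mono hkn hgraph)
  · choose i hi using fun n ↦ (exists_mem_V_iff (M := K n)).2 (not_exists.1 hx n)
    have hclosed (n : ℕ) : IsClosed ((K n).W (i n)) :=
      ((hK.isKnasterReichbach n).isClopen_W _).isClosed
    have hnonempty (n : ℕ) : ((K n).W (i n)).Nonempty :=
      ((hK.isKnasterReichbach n).equipotent _).elim fun g ↦ ⟨_, (g ⟨x, hi n⟩).2⟩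
    obtain ⟨y, hy⟩ := IsCompact.nonempty_iInter_of_sequence_nonempty_isCompact_isClosed
      (fun n ↦ (K n).W (i n)) (fun n ↦ hK.W_subset_W n.le_succ (hi _) (hi _)) hnonempty
      (hclosed 0).isCompact hclosed
    exact ⟨y, fun n ↦ mem_region.2 <| Or.inr ⟨i n, hi n, mem_iInter.1 hy n⟩⟩

theorem eq_of_forall_mem_region [T1Space β] (hK : IsKnasterReichbachSystem K) {x : α} {y y' : β}
    (hy : ∀ n, (x, y) ∈ (K n).region) (hy' : ∀ n, (x, y') ∈ (K n).region) : y = y' := by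
  by_cases hx : ∃ k, x ∈ (K k).E
  · obtain ⟨k, hk⟩ := hx
    exact eq_of_mem_graph (mem_graph_of_mem_region (hy k) hk) (mem_graph_of_mem_region (hy' k) hk)
  · refine hK.shrinking_W.eq_of_forall_exists_mem fun n ↦ ?_
    obtain ⟨i, hi⟩ := exists_mem_V_iff.2 (not_exists.1 hx n)
    exact ⟨i, mem_W_of_mem_region (hy n) hi, mem_W_of_mem_region (hy' n) hi⟩

theorem exists_equiv_forall_mem_region [CompactSpace α] [T1Space α] [CompactSpace β] [T1Space β]
    (hK : IsKnasterReichbachSystem K) : ∃ f : α ≃ β, ∀ n x, (x, f x) ∈ (K n).region := by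
  choose f hf using hK.exists_forall_mem_region
  choose g hg using hK.symm.exists_forall_mem_region
  exact ⟨⟨f, g,
    fun x ↦ hK.symm.eq_of_forall_mem_region (hg (f x)) fun n ↦ mem_region_symm.2 (hf x n),
    fun y ↦ hK.eq_of_forall_mem_region (hf (g y)) fun n ↦ mem_region_symm.1 (hg y n)⟩,
    fun n x ↦ hf x n⟩

theorem continuous_of_forall_mem_region (hK : IsKnasterReichbachSystem K) {f : α ≃ β}
    (hf : ∀ n x, (x, f x) ∈ (K n).region) : Continuous f := by
  refine continuous_iff_continuousAt.2 fun x ↦ ?_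
  by_cases hx : ∃ k, x ∈ (K k).E
  · obtain ⟨k, hk⟩ := hx
    exact (hK.isKnasterReichbach k).continuousAt f (hf k) x hk
  · intro O hO
    obtain ⟨n, hn⟩ := hK.shrinking_W (f x) O hO
    obtain ⟨i, hi⟩ := exists_mem_V_iff.2 (not_exists.1 hx n)
    have hcell : (K n).V i ∈ 𝓝 x := ((hK.isKnasterReichbach n).isClopen_V i).isOpen.mem_nhds hi
    refine mem_map.2 (mem_of_superset hcell fun z hz ↦ ?_)
    exact hn i (mem_W_of_mem_region (hf n x) hi) (mem_W_of_mem_region (hf n z) hz)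

theorem exists_homeomorph_forall_mem_region
    [CompactSpace α] [T1Space α] [CompactSpace β] [T1Space β] (hK : IsKnasterReichbachSystem K) :
    ∃ H : α ≃ₜ β, ∀ n x, (x, H x) ∈ (K n).region := by
  obtain ⟨f, hf⟩ := hK.exists_equiv_forall_mem_region
  refine ⟨⟨f, hK.continuous_of_forall_mem_region hf, ?_⟩, hf⟩
  refine hK.symm.continuous_of_forall_mem_region (f := f.symm) fun n y ↦ mem_region_symm.2 ?_
  simpa using hf n (f.symm y)

end IsKnasterReichbachSystem

theorem statement9_general [CompactSpace α] [T1Space α] [CompactSpace β] [T1Space β]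
    {K : ∀ n, CellMatching (ι n) α β} (hK : IsKnasterReichbachSystem K) {X : Set α} {Y : Set β}
    (hX : (⋃ n, (K n).E)ᶜ ⊆ X) (hY : (⋃ n, (K n).F)ᶜ ⊆ Y)
    (hXY : ∀ n (x : (K n).E), (x : α) ∈ X ↔ ((K n).h x : β) ∈ Y) :
    ∃ H : α ≃ₜ β, (∀ n (x : (K n).E), H x = (K n).h x) ∧ H '' X = Y := by
  obtain ⟨H, hH⟩ := hK.exists_homeomorph_forall_mem_region
  have extends_h (n : ℕ) (x : (K n).E) : H x = (K n).h x :=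
    eq_of_mem_graph (mem_graph_of_mem_region (hH n x) x.2) ((K n).mk_mem_graph x)
  refine ⟨H, extends_h, ?_⟩
  suffices H ⁻¹' Y = X by rw [← this, H.image_preimage]
  ext x
  by_cases hx : ∃ n, x ∈ (K n).E
  · obtain ⟨n, hn⟩ := hx
    rw [mem_preimage, extends_h n ⟨x, hn⟩, hXY n ⟨x, hn⟩]
  · have hHx : ¬∃ n, H x ∈ (K n).F := fun ⟨n, hn⟩ ↦ hx ⟨n, mem_E_of_mem_region (hH n x) hn⟩
    exact iff_of_true (hY (by simpa using hHx)) (hX (by simpa using hx))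

end System

namespace IsKRCover

variable {E F : Set (ℕ → Bool)} {h : E ≃ₜ F} {𝒱 𝒲 : Set (Set (ℕ → Bool))}
  {ψ : Set (ℕ → Bool) → Set (ℕ → Bool)}

/-- The cell matching of a Knaster–Reichbach cover of the Cantor set; the cells of both partitions
are indexed by the members of `𝒱`. -/
def matching (hK : IsKRCover E F h 𝒱 𝒲 ψ) : CellMatching 𝒱 (ℕ → Bool) (ℕ → Bool) where
  E := E
  F := F
  h := h.toEquiv
  V U := U
  W U := ψ U
  disjoint_V U U' hne := hK.1.2.1 U.2 U'.2 (Subtype.coe_ne_coe.2 hne)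
  disjoint_W U U' hne := hK.2.1.2.1 (hK.2.2.1.mapsTo U.2) (hK.2.2.1.mapsTo U'.2)
    fun heq ↦ hne (Subtype.ext (hK.2.2.1.injOn U.2 U'.2 heq))
  iUnion_V := by rw [← sUnion_eq_iUnion, hK.1.2.2]
  iUnion_W := by rw [← sUnion_range, ← image_eq_range, hK.2.2.1.image_eq, hK.2.1.2.2]

theorem continuousAt_of_forall_mem_region (hK : IsKRCover E F h 𝒱 𝒲 ψ)
    {f : (ℕ → Bool) ≃ (ℕ → Bool)} (hf : ∀ x, (x, f x) ∈ hK.matching.region) :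
    (∀ x ∈ E, ContinuousAt f x) ∧ ∀ y ∈ F, ContinuousAt f.symm y := by
  refine hK.2.2.2 f (fun x ↦ ?_) fun U hU ↦ Subset.antisymm ?_ fun y hy ↦ ?_
  · exact eq_of_mem_graph (mem_graph_of_mem_region (hf x) x.2) (hK.matching.mk_mem_graph x)
  · exact image_subset_iff.2 fun x hx ↦
      mem_W_of_mem_region (M := hK.matching) (i := ⟨U, hU⟩) (hf x) hx
  · have hy' : (f.symm y, y) ∈ hK.matching.region := by simpa using hf (f.symm y)
    exact ⟨f.symm y, mem_V_of_mem_region (M := hK.matching) (i := ⟨U, hU⟩) hy' hy,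
      f.apply_symm_apply y⟩

theorem isKnasterReichbach_matching (hK : IsKRCover E F h 𝒱 𝒲 ψ) (hE : IsClosed E)
    (hE' : IsNowhereDense E) (hF : IsClosed F) (hF' : IsNowhereDense F) :
    hK.matching.IsKnasterReichbach where
  isClopen_V U := (hK.1.1 U U.2).1
  isClopen_W U := (hK.2.1.1 _ (hK.2.2.1.mapsTo U.2)).1
  dense_compl_E := interior_eq_empty_iff_dense_compl.1 (hE.isNowhereDense_iff.1 hE')
  dense_compl_F := interior_eq_empty_iff_dense_compl.1 (hF.isNowhereDense_iff.1 hF')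
  equipotent U := by
    obtain ⟨hV, hVne⟩ := hK.1.1 U U.2
    obtain ⟨hW, hWne⟩ := hK.2.1.1 _ (hK.2.2.1.mapsTo U.2)
    obtain ⟨e⟩ := nonempty_equiv_cantor_of_isClopen hV hVne
    obtain ⟨e'⟩ := nonempty_equiv_cantor_of_isClopen hW hWne
    exact ⟨e.trans e'.symm⟩
  continuousAt _ hf := (hK.continuousAt_of_forall_mem_region hf).1
  continuousAt_symm _ hf := (hK.continuousAt_of_forall_mem_region hf).2

end IsKRCover

namespace IsKRSystem

variable {m : MetricSpace (ℕ → Bool)} {E F : ℕ → Set (ℕ → Bool)} {h : ∀ n, E n ≃ₜ F n}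
  {𝒱 𝒲 : ℕ → Set (Set (ℕ → Bool))} {ψ : ℕ → Set (ℕ → Bool) → Set (ℕ → Bool)}

theorem isKRCover (hsys : IsKRSystem m E F h 𝒱 𝒲 ψ) (n : ℕ) :
    IsKRCover (E n) (F n) (h n) (𝒱 n) (𝒲 n) (ψ n) :=
  hsys.2.2.2.1 n

theorem isKnasterReichbachSystem
    (hm : m.toPseudoMetricSpace.toUniformSpace.toTopologicalSpace
      = (inferInstance : TopologicalSpace (ℕ → Bool)))
    (hsys : IsKRSystem m E F h 𝒱 𝒲 ψ) :
    IsKnasterReichbachSystem fun n ↦ (hsys.isKRCover n).matching := by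
  obtain ⟨nowhereDense, E_mono, h_extends, cover, diam_V, diam_W, refine_V, -, coherent⟩ := hsys
  have tendsto_mesh : Tendsto (fun n ↦ (2 : ℝ)⁻¹ ^ n) atTop (𝓝 0) :=
    tendsto_pow_atTop_nhds_zero_of_lt_one (by norm_num) (by norm_num)
  refine ⟨fun n ↦ ?_, ?_, ?_, ?_, ?_⟩
  · obtain ⟨hE, hE', hF, hF'⟩ := nowhereDense n
    exact (cover n).isKnasterReichbach_matching hE hE' hF hF'
  · rintro n k hnk ⟨x, y⟩ hxy
    obtain ⟨hx, rfl⟩ := mem_graph.1 hxy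
    exact ⟨E_mono n k hnk hx, (h_extends n k hnk x hx _).symm⟩
  · rintro n k hnk ⟨U, hU⟩
    obtain ⟨V, hV, hUV⟩ := refine_V k n hnk U hU
    exact ⟨⟨V, hV⟩, hUV, (coherent k n hnk U hU V hV).1 hUV⟩
  · exact hasShrinkingCells_of_tendsto_diam m.toPseudoMetricSpace hm tendsto_mesh
      fun n U ↦ diam_V n U U.2
  · exact hasShrinkingCells_of_tendsto_diam m.toPseudoMetricSpace hm tendsto_mesh
      fun n U ↦ diam_W n _ ((cover n).2.2.1.mapsTo U.2)

end IsKRSystem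

theorem mem_iff_apply_mem_of_image_eq {α β : Type*} {E X : Set α} {F Y : Set β} (h : E ≃ F)
    (hXY : Subtype.val '' (h '' (Subtype.val ⁻¹' X)) = Y ∩ F) (x : E) :
    (x : α) ∈ X ↔ (h x : β) ∈ Y := by
  have himage : h '' (Subtype.val ⁻¹' X) = Subtype.val ⁻¹' Y := by
    rw [← preimage_image_eq (h '' _) Subtype.val_injective, hXY, inter_comm,
      Subtype.preimage_coe_self_inter]
  rw [← mem_preimage (f := Subtype.val) (s := Y), ← himage, h.injective.mem_set_image,
    mem_preimage]

/-- Let `X` be a subspace of the Cantor set `2^ω` and let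
`⟨⟨h_n, K_n⟩ : n ∈ ω⟩` be a Knaster-Reichbach system (with respect to an
admissible metric) satisfying additionally: (7) `2^ω \ ⋃ₙ E n ⊆ X`;
(8) `2^ω \ ⋃ₙ F n ⊆ X`; (9) `h n [X ∩ E n] = X ∩ F n` for each `n`. Then there
exists a homeomorphism `H : 2^ω → 2^ω` extending `⋃ₙ h n` with `H[X] = X`. -/
theorem statement9 (X : Set (ℕ → Bool)) (m : MetricSpace (ℕ → Bool))
    (hm : m.toPseudoMetricSpace.toUniformSpace.toTopologicalSpace
        = (inferInstance : TopologicalSpace (ℕ → Bool)))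
    (E F : ℕ → Set (ℕ → Bool)) (h : ∀ n, E n ≃ₜ F n)
    (𝒱 𝒲 : ℕ → Set (Set (ℕ → Bool)))
    (ψ : ℕ → Set (ℕ → Bool) → Set (ℕ → Bool))
    (hsys : IsKRSystem m E F h 𝒱 𝒲 ψ)
    (h7 : (⋃ n, E n)ᶜ ⊆ X)
    (h8 : (⋃ n, F n)ᶜ ⊆ X)
    (h9 : ∀ n, Subtype.val '' (⇑(h n) '' (Subtype.val ⁻¹' X)) = X ∩ F n) :
    ∃ H : (ℕ → Bool) ≃ₜ (ℕ → Bool),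
      (∀ (n : ℕ) (x : ℕ → Bool) (hx : x ∈ E n),
        H x = (((h n) ⟨x, hx⟩ : F n) : ℕ → Bool)) ∧ H '' X = X := by
  obtain ⟨H, H_extends, H_image⟩ := statement9_general (hsys.isKnasterReichbachSystem hm) h7 h8
    fun n ↦ mem_iff_apply_mem_of_image_eq (h n).toEquiv (h9 n)
  exact ⟨H, fun n x hx ↦ H_extends n ⟨x, hx⟩, H_image⟩
end
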